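/- Let d ∈ {1,2,3}, let û₀ : ℝ^d → ℂ be smooth with compact support, and let ρ > 0. Let Q̂₀^ρ be the regularized reconstruction operator (with trivial profile evolution b = 0) given by Q̂₀^ρ = F_d ∘ S ∘ F₁⁻¹ ∘ J₀ ∘ R_ρ. Assume the regularized profile evolution V^ρ := (F₁⁻¹ ∘ J₀ ∘ R_ρ) û₀ satisfies: (i) there exist C, α > 0 with |V^ρ(z,q,τ)| ≤ C(1+|z|)^{-d-α} for all z ∈ ℝ, q ∈ S^{d-1}, τ > 0, and (ii) for every τ > 0 the map (ξ,q) ↦ F₁V^ρ(ξ,q,τ) is of class C^{d-1}(ℝ × S^{d-1}; ℂ). Then for every τ > 0 and every k ∈ ℝ^d with |k| > ρ one has (Q̂₀^ρ û₀)(k, τ/ε²) − e^{-ic|k|τ/ε²} û₀(k) → 0 as ε → 0. -/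

import Mathlib

open MeasureTheory Real Filter Metric
open scoped RealInnerProductSpace Topology ENNReal

noncomputable section

/-- The `d`-dimensional Fourier transform `(F_d u)(k) = ∫ u(x) e^{-ik·x} dx`. -/
def fourierD (d : ℕ) (u : EuclideanSpace ℝ (Fin d) → ℂ)
    (k : EuclideanSpace ℝ (Fin d)) : ℂ :=
  ∫ x : EuclideanSpace ℝ (Fin d), u x * Complex.exp (-Complex.I * ((⟪k, x⟫ : ℝ) : ℂ))

/-- The one-dimensional Fourier transform `(F₁ f)(ξ) = ∫ f(z) e^{-iξz} dz`. -/
def fourier1 (f : ℝ → ℂ) (ξ : ℝ) : ℂ :=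
  ∫ z : ℝ, f z * Complex.exp (-Complex.I * (ξ : ℂ) * (z : ℂ))

/-- The inverse one-dimensional Fourier transform `(F₁⁻¹ g)(z) = (2π)⁻¹ ∫ e^{izξ} g(ξ) dξ`. -/
def invFourier1 (g : ℝ → ℂ) (z : ℝ) : ℂ :=
  ((2 * π : ℝ) : ℂ)⁻¹ * ∫ ξ : ℝ, Complex.exp (Complex.I * (z : ℂ) * (ξ : ℂ)) * g ξ

/-- The regularized restriction operator
`(R_ρ û₀)(ξ,q) = (2πi)^{-(d-1)/2} W_ρ(ξ) û₀(|ξ|q)`. -/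
def restrictionReg (d : ℕ) (Wρ : ℝ → ℝ) (u0 : EuclideanSpace ℝ (Fin d) → ℂ)
    (ξ : ℝ) (q : EuclideanSpace ℝ (Fin d)) : ℂ :=
  (2 * (π : ℂ) * Complex.I) ^ (-(((d : ℂ) - 1) / 2)) * (Wρ ξ : ℂ) * u0 (|ξ| • q)

/-- The regularized profile evolution `V^ρ = (F₁⁻¹ ∘ J_b ∘ R_ρ) û₀`, where
`(J_b V̂₀)(ξ,q,τ) = e^{-ib(ξ)τ} V̂₀(ξ,q)`. -/
def profileReg (d : ℕ) (b : ℝ → ℝ) (Wρ : ℝ → ℝ) (u0 : EuclideanSpace ℝ (Fin d) → ℂ)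
    (z : ℝ) (q : EuclideanSpace ℝ (Fin d)) (τ : ℝ) : ℂ :=
  invFourier1 (fun ξ =>
    Complex.exp (-Complex.I * (b ξ : ℂ) * (τ : ℂ)) * restrictionReg d Wρ u0 ξ q) z

/-- The regularized reconstruction operator in Fourier space,
`Q̂_b^ρ = F_d ∘ S ∘ F₁⁻¹ ∘ J_b ∘ R_ρ`, where
`(S V)(x,t) = (ct)^{-(d-1)/2} 1_{|x|<2ct} V(|x|-ct, x/|x|, ε²t)`. -/
def QhatReg (d : ℕ) (c : ℝ) (b : ℝ → ℝ) (Wρ : ℝ → ℝ)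
    (u0 : EuclideanSpace ℝ (Fin d) → ℂ) (ε : ℝ)
    (k : EuclideanSpace ℝ (Fin d)) (t : ℝ) : ℂ :=
  fourierD d (fun x =>
    ((((c * t) ^ (-(((d : ℝ) - 1) / 2)) *
        Set.indicator {y : EuclideanSpace ℝ (Fin d) | ‖y‖ < 2 * c * t}
          (fun _ => (1 : ℝ)) x : ℝ)) : ℂ) *
      profileReg d b Wρ u0 (‖x‖ - c * t) (‖x‖⁻¹ • x) (ε ^ 2 * t)) k

/-!
Put `R = c t`. In polar coordinates around the shell, `r = R + z`, the Fourier transform of the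
shell field at `k` becomes an integral over directions `q` of `exp (-i R ⟪k, q⟫)` times the
one-dimensional Fourier transform, at `⟪k, q⟫`, of the profile weighted by
`R ^ (-(d-1)/2) (R + z) ^ (d-1)`. The weight is `R ^ ((d-1)/2)` plus a term linear in `z`, whose
contribution vanishes by the Riemann–Lebesgue lemma on the sphere, plus a remainder that vanishes by
dominated convergence. The leading term is a stationary phase integral with critical points
`q = ± k / |k|`. The cutoff kills the amplitude on the half sphere `⟪k, q⟫ ≤ 0`, so only
`q = k / |k|` contributes, with `(2 π i / |k|) ^ ((d-1)/2) exp (-i R |k|)`, and the normalization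
of the restriction operator cancels exactly this constant.
-/

section Gaussian

variable {b : ℂ}

lemma hasDerivAt_exp_neg_mul_sq (b : ℂ) (t : ℝ) :
    HasDerivAt (fun t : ℝ => Complex.exp (-b * (t : ℂ) ^ 2))
      (-(2 * b * t) * Complex.exp (-b * (t : ℂ) ^ 2)) t := by
  have hsq : HasDerivAt (fun z : ℂ => Complex.exp (-b * z ^ 2))
      (Complex.exp (-b * (t : ℂ) ^ 2) * (-b * (2 * t))) t := by
    simpa using ((hasDerivAt_pow 2 (t : ℂ)).const_mul (-b)).cexp
  exact hsq.comp_ofReal.congr_deriv (by ring)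

lemma norm_exp_neg_mul_sq_le_one (hb : 0 ≤ b.re) (t : ℝ) :
    ‖Complex.exp (-b * (t : ℂ) ^ 2)‖ ≤ 1 := by
  rw [norm_cexp_neg_mul_sq, exp_le_one_iff]
  nlinarith [sq_nonneg t]

lemma continuousOn_inv_sq_mul_exp_neg_mul_sq (b : ℂ) :
    ContinuousOn (fun t : ℝ => ((t : ℂ) ^ 2)⁻¹ * Complex.exp (-b * (t : ℂ) ^ 2)) (Set.Ioi 0) := by
  refine ContinuousOn.mul (ContinuousOn.inv₀ (by fun_prop) fun t ht => ?_) (by fun_prop)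
  exact pow_ne_zero 2 (Complex.ofReal_ne_zero.2 (ne_of_gt ht))

lemma integral_exp_neg_mul_sq_by_parts (hb : b ≠ 0) {y z : ℝ} (hy : 0 < y) (hyz : y ≤ z) :
    ∫ t in y..z, Complex.exp (-b * (t : ℂ) ^ 2) =
      (2 * b)⁻¹ * ((y : ℂ)⁻¹ * Complex.exp (-b * (y : ℂ) ^ 2) -
        (z : ℂ)⁻¹ * Complex.exp (-b * (z : ℂ) ^ 2) -
        ∫ t in y..z, ((t : ℂ) ^ 2)⁻¹ * Complex.exp (-b * (t : ℂ) ^ 2)) := by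
  have hpos : ∀ t ∈ Set.uIcc y z, 0 < t := fun t ht =>
    hy.trans_le (Set.uIcc_of_le hyz ▸ ht).1
  have hint : IntervalIntegrable
      (fun t : ℝ => ((t : ℂ) ^ 2)⁻¹ * Complex.exp (-b * (t : ℂ) ^ 2)) volume y z :=
    ((continuousOn_inv_sq_mul_exp_neg_mul_sq b).mono hpos).intervalIntegrable
  have hexp : IntervalIntegrable
      (fun t : ℝ => 2 * b * Complex.exp (-b * (t : ℂ) ^ 2)) volume y z :=
    Continuous.intervalIntegrable (by fun_prop) _ _
  have hderiv : ∀ t ∈ Set.uIcc y z,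
      HasDerivAt (fun t : ℝ => -((t : ℂ)⁻¹ * Complex.exp (-b * (t : ℂ) ^ 2)))
        (((t : ℂ) ^ 2)⁻¹ * Complex.exp (-b * (t : ℂ) ^ 2) +
          2 * b * Complex.exp (-b * (t : ℂ) ^ 2)) t := by
    intro t ht
    have ht0 : (t : ℂ) ≠ 0 := Complex.ofReal_ne_zero.2 (hpos t ht).ne'
    refine ((hasDerivAt_inv ht0).comp_ofReal.mul
      (hasDerivAt_exp_neg_mul_sq b t)).neg.congr_deriv ?_
    field_simp
    ring
  have hftc := intervalIntegral.integral_eq_sub_of_hasDerivAt hderiv (hint.add hexp)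
  rw [intervalIntegral.integral_add hint hexp, intervalIntegral.integral_const_mul] at hftc
  rw [eq_inv_mul_iff_mul_eq₀ (mul_ne_zero two_ne_zero hb)]
  linear_combination hftc

lemma norm_integral_exp_neg_mul_sq_le (hb : b ≠ 0) (hre : 0 ≤ b.re) {y z : ℝ}
    (hy : 0 < y) (hyz : y ≤ z) :
    ‖∫ t in y..z, Complex.exp (-b * (t : ℂ) ^ 2)‖ ≤ (‖b‖ * y)⁻¹ := by
  have hz : 0 < z := hy.trans_le hyz
  have : 0 < ‖b‖ := norm_pos_iff.2 hb
  have hboundary : ∀ t : ℝ, 0 < t →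
      ‖(t : ℂ)⁻¹ * Complex.exp (-b * (t : ℂ) ^ 2)‖ ≤ t⁻¹ := fun t ht => by
    rw [norm_mul, norm_inv, Complex.norm_of_nonneg ht.le]
    exact mul_le_of_le_one_right (by positivity) (norm_exp_neg_mul_sq_le_one hre t)
  have hinvsq : ∫ t in y..z, (t ^ 2)⁻¹ = y⁻¹ - z⁻¹ := by
    have h := integral_zpow (a := y) (b := z) (n := -2)
      (Or.inr ⟨by norm_num, Set.notMem_uIcc_of_lt hy hz⟩)
    norm_num [zpow_neg] at h
    rw [h]
    ring
  have hrest : ‖∫ t in y..z, ((t : ℂ) ^ 2)⁻¹ * Complex.exp (-b * (t : ℂ) ^ 2)‖ ≤ y⁻¹ - z⁻¹ := by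
    rw [← hinvsq]
    refine intervalIntegral.norm_integral_le_of_norm_le hyz (ae_of_all _ fun t _ => ?_) ?_
    · rw [norm_mul, norm_inv, norm_pow, Complex.norm_real, norm_eq_abs, sq_abs]
      exact mul_le_of_le_one_right (by positivity) (norm_exp_neg_mul_sq_le_one hre t)
    · refine ContinuousOn.intervalIntegrable (ContinuousOn.inv₀ (by fun_prop) fun t ht => ?_)
      exact pow_ne_zero 2 (hy.trans_le (Set.uIcc_of_le hyz ▸ ht).1).ne'
  calc ‖∫ t in y..z, Complex.exp (-b * (t : ℂ) ^ 2)‖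
      ≤ (2 * ‖b‖)⁻¹ * (y⁻¹ + z⁻¹ + (y⁻¹ - z⁻¹)) := by
        rw [integral_exp_neg_mul_sq_by_parts hb hy hyz, norm_mul, norm_inv, norm_mul,
          Complex.norm_ofNat]
        gcongr
        refine (norm_sub_le _ _).trans (add_le_add ((norm_sub_le _ _).trans ?_) hrest)
        exact add_le_add (hboundary y hy) (hboundary z hz)
    _ = (‖b‖ * y)⁻¹ := by
        field_simp
        ring

/-- The primitive of a complex Gaussian vanishing at `0`; a Fresnel integral when `b` is purely
imaginary. -/
def gaussianPrimitive (b : ℂ) (y : ℝ) : ℂ :=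
  ∫ t in (0 : ℝ)..y, Complex.exp (-b * (t : ℂ) ^ 2)

lemma hasDerivAt_gaussianPrimitive (b : ℂ) (y : ℝ) :
    HasDerivAt (gaussianPrimitive b) (Complex.exp (-b * (y : ℂ) ^ 2)) y :=
  have hcont : Continuous fun t : ℝ => Complex.exp (-b * (t : ℂ) ^ 2) := by fun_prop
  intervalIntegral.integral_hasDerivAt_right (hcont.intervalIntegrable _ _)
    (hcont.stronglyMeasurableAtFilter _ _) hcont.continuousAt

lemma continuous_gaussianPrimitive (b : ℂ) : Continuous (gaussianPrimitive b) :=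
  continuous_iff_continuousAt.2 fun y => (hasDerivAt_gaussianPrimitive b y).continuousAt

lemma norm_half_gaussian_sub_gaussianPrimitive_le_of_re_pos (hre : 0 < b.re) {y : ℝ} (hy : 0 < y) :
    ‖(π / b) ^ (1 / 2 : ℂ) / 2 - gaussianPrimitive b y‖ ≤ (‖b‖ * y)⁻¹ := by
  have hb : b ≠ 0 := fun h => by simp [h] at hre
  have hlim := (intervalIntegral_tendsto_integral_Ioi 0
    (integrable_cexp_neg_mul_sq hre).integrableOn tendsto_id).sub_const (gaussianPrimitive b y)
  rw [integral_gaussian_complex_Ioi hre] at hlim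
  refine le_of_tendsto hlim.norm ?_
  filter_upwards [eventually_ge_atTop y] with z hz
  have hint : ∀ u v : ℝ, IntervalIntegrable
      (fun t : ℝ => Complex.exp (-b * (t : ℂ) ^ 2)) volume u v := fun u v =>
    Continuous.intervalIntegrable (by fun_prop) u v
  rw [id, gaussianPrimitive, intervalIntegral.integral_interval_sub_left (hint _ _) (hint _ _)]
  exact norm_integral_exp_neg_mul_sq_le hb hre.le hy hz

lemma ofReal_div_mem_slitPlane {r : ℝ} (hr : 0 < r) (hb : b ≠ 0) (hre : 0 ≤ b.re) :
    (r / b : ℂ) ∈ Complex.slitPlane := by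
  have hnorm : 0 < Complex.normSq b := Complex.normSq_pos.2 hb
  rw [Complex.mem_slitPlane_iff, Complex.div_re, Complex.div_im]
  rcases hre.lt_or_eq with hpos | hzero
  · left
    simp only [Complex.ofReal_re, Complex.ofReal_im, zero_mul, zero_div, add_zero]
    positivity
  · have him : b.im ≠ 0 := fun him => hb (Complex.ext hzero.symm him)
    exact Or.inr (by simp [him, hb, hr.ne'])

lemma norm_half_gaussian_sub_gaussianPrimitive_le (hb : b ≠ 0) (hre : 0 ≤ b.re) {y : ℝ}
    (hy : 0 < y) :
    ‖(π / b) ^ (1 / 2 : ℂ) / 2 - gaussianPrimitive b y‖ ≤ (‖b‖ * y)⁻¹ := by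
  have hshift : Tendsto (fun δ : ℝ => b + δ) (𝓝[>] 0) (𝓝 b) := by
    have : Tendsto (fun δ : ℝ => b + δ) (𝓝 0) (𝓝 (b + (0 : ℝ))) :=
      Continuous.tendsto (by fun_prop) 0
    simpa using this.mono_left nhdsWithin_le_nhds
  have hcont : ContinuousAt (fun β : ℂ =>
      (π / β) ^ (1 / 2 : ℂ) / 2 - gaussianPrimitive β y) b := by
    refine ContinuousAt.sub (((continuousAt_const.div continuousAt_id hb).cpow
      continuousAt_const (ofReal_div_mem_slitPlane pi_pos hb hre)).div_const 2) ?_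
    exact (intervalIntegral.continuous_parametric_intervalIntegral_of_continuous'
      (f := fun (β : ℂ) (t : ℝ) => Complex.exp (-β * (t : ℂ) ^ 2)) (by fun_prop) 0 y).continuousAt
  have hbound : ContinuousAt (fun β : ℂ => (‖β‖ * y)⁻¹) b :=
    ContinuousAt.inv₀ (by fun_prop) (mul_ne_zero (norm_ne_zero_iff.2 hb) hy.ne')
  refine le_of_tendsto_of_tendsto (hcont.tendsto.comp hshift).norm (hbound.tendsto.comp hshift) ?_
  filter_upwards [self_mem_nhdsWithin] with δ hδ
  exact norm_half_gaussian_sub_gaussianPrimitive_le_of_re_pos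
    (by simpa using add_pos_of_nonneg_of_pos hre hδ) hy

lemma tendsto_gaussianPrimitive (hb : b ≠ 0) (hre : 0 ≤ b.re) :
    Tendsto (gaussianPrimitive b) atTop (𝓝 ((π / b) ^ (1 / 2 : ℂ) / 2)) := by
  have hdecay : Tendsto (fun y : ℝ => (‖b‖ * y)⁻¹) atTop (𝓝 0) :=
    (tendsto_id.const_mul_atTop (norm_pos_iff.2 hb)).inv_tendsto_atTop
  rw [tendsto_iff_norm_sub_tendsto_zero]
  refine squeeze_zero' (Eventually.of_forall fun _ => norm_nonneg _) ?_ hdecay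
  filter_upwards [eventually_gt_atTop 0] with y hy
  rw [norm_sub_rev]
  exact norm_half_gaussian_sub_gaussianPrimitive_le hb hre hy

lemma exists_norm_gaussianPrimitive_le (hb : b ≠ 0) (hre : 0 ≤ b.re) :
    ∃ M : ℝ, ∀ y : ℝ, 0 ≤ y → ‖gaussianPrimitive b y‖ ≤ M := by
  refine ⟨1 + (‖(π / b : ℂ) ^ (1 / 2 : ℂ) / 2‖ + ‖b‖⁻¹), fun y hy => ?_⟩
  rcases le_total y 1 with hy1 | hy1
  · have h := intervalIntegral.norm_integral_le_of_norm_le_const (a := 0) (b := y)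
      fun t _ => norm_exp_neg_mul_sq_le_one hre t
    rw [sub_zero, abs_of_nonneg hy, one_mul] at h
    exact h.trans (hy1.trans (le_add_of_nonneg_right (by positivity)))
  · have h := norm_half_gaussian_sub_gaussianPrimitive_le hb hre (one_pos.trans_le hy1)
    have hinv : (‖b‖ * y)⁻¹ ≤ ‖b‖⁻¹ :=
      inv_anti₀ (norm_pos_iff.2 hb) (le_mul_of_one_le_right (norm_nonneg b) hy1)
    linarith [norm_le_norm_add_norm_sub ((π / b : ℂ) ^ (1 / 2 : ℂ) / 2) (gaussianPrimitive b y)]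

end Gaussian

section Endpoint

variable {b : ℂ} {x₀ x₁ : ℝ} {h h' : ℝ → ℂ} {ψ ψ' : ℝ → ℝ}

lemma integral_mul_exp_neg_mul_sq_by_parts (hx : x₀ ≤ x₁)
    (hh : ∀ x ∈ Set.Icc x₀ x₁, HasDerivAt h (h' x) x) (hh' : ContinuousOn h' (Set.Icc x₀ x₁))
    (hψ : ∀ x ∈ Set.Icc x₀ x₁, HasDerivAt ψ (ψ' x) x) (hψ' : ContinuousOn ψ' (Set.Icc x₀ x₁)) :
    ∫ x in x₀..x₁, h x * ((ψ' x : ℂ) * Complex.exp (-b * (ψ x : ℂ) ^ 2)) =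
      h x₁ * gaussianPrimitive b (ψ x₁) - h x₀ * gaussianPrimitive b (ψ x₀) -
        ∫ x in x₀..x₁, h' x * gaussianPrimitive b (ψ x) := by
  rw [← Set.uIcc_of_le hx] at *
  have hψcont : ContinuousOn ψ (Set.uIcc x₀ x₁) := fun x hx' =>
    (hψ x hx').continuousAt.continuousWithinAt
  have hint : IntervalIntegrable
      (fun x => (ψ' x : ℂ) * Complex.exp (-b * (ψ x : ℂ) ^ 2)) volume x₀ x₁ :=
    ContinuousOn.intervalIntegrable (by fun_prop)
  refine intervalIntegral.integral_mul_deriv_eq_deriv_mul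
    (v := fun x => gaussianPrimitive b (ψ x)) hh (fun x hx' => ?_)
    hh'.intervalIntegrable hint
  exact ((hasDerivAt_gaussianPrimitive b (ψ x)).scomp x (hψ x hx')).congr_deriv
    (Complex.real_smul ..)

lemma tendsto_integral_mul_gaussianPrimitive_scaled (hb : b ≠ 0) (hre : 0 ≤ b.re) (hx : x₀ ≤ x₁)
    (hh : ContinuousOn h (Set.Icc x₀ x₁)) (hψ : ContinuousOn ψ (Set.Icc x₀ x₁))
    (hψpos : ∀ x ∈ Set.Ioc x₀ x₁, 0 < ψ x) :
    Tendsto (fun S : ℝ => ∫ x in x₀..x₁, h x * gaussianPrimitive b (S * ψ x)) atTop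
      (𝓝 (∫ x in x₀..x₁, h x * ((π / b) ^ (1 / 2 : ℂ) / 2))) := by
  obtain ⟨M, hM⟩ := exists_norm_gaussianPrimitive_le hb hre
  have hcont := continuous_gaussianPrimitive b
  have huIoc := Set.uIoc_of_le hx
  have hint : IntervalIntegrable h volume x₀ x₁ :=
    ContinuousOn.intervalIntegrable (Set.uIcc_of_le hx ▸ hh)
  refine intervalIntegral.tendsto_integral_filter_of_dominated_convergence
    (fun x => ‖h x‖ * M) (Eventually.of_forall fun S => ?_) ?_ (hint.norm.mul_const M)
    (ae_of_all _ fun x hx' => ?_)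
  · rw [huIoc]
    refine (ContinuousOn.aestronglyMeasurable ?_ measurableSet_Icc).mono_set
      Set.Ioc_subset_Icc_self
    fun_prop
  · filter_upwards [eventually_ge_atTop 0] with S hS
    refine ae_of_all _ fun x hx' => ?_
    rw [norm_mul]
    gcongr
    exact hM _ (mul_nonneg hS (hψpos x (huIoc ▸ hx')).le)
  · exact ((tendsto_gaussianPrimitive hb hre).comp
      (tendsto_id.atTop_mul_const (hψpos x (huIoc ▸ hx')))).const_mul (h x)

theorem tendsto_integral_mul_exp_neg_mul_sq_scaled (hb : b ≠ 0) (hre : 0 ≤ b.re) (hx : x₀ < x₁)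
    (hh : ∀ x ∈ Set.Icc x₀ x₁, HasDerivAt h (h' x) x) (hh' : ContinuousOn h' (Set.Icc x₀ x₁))
    (hψ : ∀ x ∈ Set.Icc x₀ x₁, HasDerivAt ψ (ψ' x) x) (hψ' : ContinuousOn ψ' (Set.Icc x₀ x₁))
    (hψ0 : ψ x₀ = 0) (hψpos : ∀ x ∈ Set.Ioc x₀ x₁, 0 < ψ x) :
    Tendsto (fun S : ℝ => ∫ x in x₀..x₁,
        h x * ((S * ψ' x : ℝ) * Complex.exp (-b * ((S * ψ x : ℝ) : ℂ) ^ 2)))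
      atTop (𝓝 ((π / b) ^ (1 / 2 : ℂ) / 2 * h x₀)) := by
  have hψcont : ContinuousOn ψ (Set.Icc x₀ x₁) := fun x hx' =>
    (hψ x hx').continuousAt.continuousWithinAt
  have hparts (S : ℝ) := integral_mul_exp_neg_mul_sq_by_parts (b := b) hx.le hh hh'
    (fun x hx' => (hψ x hx').const_mul S) (hψ'.const_mul S)
  have hendpoint := (tendsto_gaussianPrimitive hb hre).comp
    (tendsto_id.atTop_mul_const (hψpos x₁ (Set.right_mem_Ioc.2 hx)))
  have hrest := tendsto_integral_mul_gaussianPrimitive_scaled hb hre hx.le hh' hψcont hψpos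
  have hftc : ∫ x in x₀..x₁, h' x = h x₁ - h x₀ := by
    rw [← Set.uIcc_of_le hx.le] at hh hh'
    exact intervalIntegral.integral_eq_sub_of_hasDerivAt hh hh'.intervalIntegrable
  have hzero : gaussianPrimitive b 0 = 0 := intervalIntegral.integral_same
  simp_rw [hparts, hψ0, mul_zero, hzero, mul_zero, sub_zero]
  refine ((hendpoint.const_mul (h x₁)).sub hrest).trans_eq (congrArg 𝓝 ?_)
  rw [intervalIntegral.integral_mul_const, hftc]
  ring

end Endpoint

section OscillatoryIntegrals

theorem tendsto_setIntegral_exp_phase_mul {s : Set ℝ} (hs : MeasurableSet s) {ψ ψ' : ℝ → ℝ}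
    (hψ : ∀ x ∈ s, HasDerivWithinAt ψ (ψ' x) s x) (hinj : Set.InjOn ψ s)
    (hψ'0 : ∀ x ∈ s, ψ' x ≠ 0) (h : ℝ → ℂ) :
    Tendsto (fun R : ℝ => ∫ x in s, Complex.exp (Complex.I * R * (ψ x : ℂ)) * h x)
      atTop (𝓝 0) := by
  set g : ℝ → ℂ := fun y =>
    h (Function.invFunOn ψ s y) / ((|ψ' (Function.invFunOn ψ s y)| : ℝ) : ℂ)
  have himage : MeasurableSet (ψ '' s) :=
    hs.image_of_continuousOn_injOn (fun x hx => (hψ x hx).continuousWithinAt) hinj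
  have hscale : Tendsto (fun R : ℝ => -(2 * π)⁻¹ * R) atTop (cocompact ℝ) :=
    (tendsto_id.const_mul_atTop_of_neg (by simp [pi_pos])).mono_right atBot_le_cocompact
  refine ((Real.tendsto_integral_exp_smul_cocompact ((ψ '' s).indicator g)).comp hscale).congr
    fun R => ?_
  have hchar : ∀ y : ℝ, Real.fourierChar (-(y * (-(2 * π)⁻¹ * R))) • (ψ '' s).indicator g y =
      (ψ '' s).indicator (fun y => Complex.exp (Complex.I * R * (y : ℂ)) * g y) y := by
    intro y
    rw [Set.indicator_mul_right, Circle.smul_def, Real.fourierChar_apply, smul_eq_mul]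
    congr 2
    push_cast
    field_simp
  simp_rw [Function.comp_apply, hchar]
  rw [integral_indicator himage, integral_image_eq_integral_abs_deriv_smul hs hψ hinj]
  refine setIntegral_congr_fun hs fun x hx => ?_
  have hne : ((|ψ' x| : ℝ) : ℂ) ≠ 0 := Complex.ofReal_ne_zero.2 (abs_ne_zero.2 (hψ'0 x hx))
  simp only [g, hinj.leftInvOn_invFunOn hx, Complex.real_smul]
  field_simp

lemma ofReal_mul_cpow {r : ℝ} (hr : 0 < r) {z : ℂ} (hz : z ≠ 0) (s : ℂ) :
    ((r : ℂ) * z) ^ s = (r : ℂ) ^ s * z ^ s := by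
  have hrC : (r : ℂ) ≠ 0 := Complex.ofReal_ne_zero.2 hr.ne'
  rw [Complex.cpow_def_of_ne_zero (mul_ne_zero hrC hz), Complex.cpow_def_of_ne_zero hrC,
    Complex.cpow_def_of_ne_zero hz, Complex.log_ofReal_mul hr hz, add_mul, Complex.exp_add,
    Complex.ofReal_log hr.le]

variable {κ : ℝ} {f f' : ℝ → ℂ}

lemma cpow_half_pi_div_neg_two_mul_I (hκ : 0 < κ) :
    (π / -(2 * κ * Complex.I) : ℂ) ^ (1 / 2 : ℂ) =
      (2 * π * Complex.I / κ) ^ (1 / 2 : ℂ) / 2 := by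
  have hκC : (κ : ℂ) ≠ 0 := Complex.ofReal_ne_zero.2 hκ.ne'
  have hfour : ((4 : ℝ) : ℂ) ^ (1 / 2 : ℂ) = 2 := by
    rw [show (1 / 2 : ℂ) = ((1 / 2 : ℝ) : ℂ) by norm_num, ← Complex.ofReal_cpow four_pos.le,
      ← sqrt_eq_rpow, show (4 : ℝ) = 2 ^ 2 by norm_num, sqrt_sq two_pos.le, Complex.ofReal_ofNat]
  have hquarter : (2 * π * Complex.I / κ : ℂ) = (4 : ℝ) * (π / -(2 * κ * Complex.I)) := by
    push_cast
    field_simp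
    linear_combination (4 : ℂ) * Complex.I_sq
  rw [hquarter, ofReal_mul_cpow four_pos, hfour, mul_div_cancel_left₀ _ two_ne_zero]
  simp [hκ.ne', pi_ne_zero]

lemma tendsto_sqrt_mul_integral_exp_cos_mul_quarter (hκ : 0 < κ)
    (hf : ∀ θ, HasDerivAt f (f' θ) θ) (hf' : Continuous f') :
    Tendsto (fun R : ℝ => (√R : ℂ) * ∫ θ in (0 : ℝ)..(π / 2),
        Complex.exp (Complex.I * R * ((κ * (1 - cos θ) : ℝ) : ℂ)) * f θ)
      atTop (𝓝 ((2 * π * Complex.I / κ) ^ (1 / 2 : ℂ) / 2 * f 0)) := by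
  have hcos : ∀ θ ∈ Set.Icc 0 (π / 2), 0 < cos (θ / 2) := fun θ hθ =>
    cos_pos_of_mem_Ioo ⟨by linarith [hθ.1, pi_pos], by linarith [hθ.2, pi_pos]⟩
  have hcosC : ∀ θ ∈ Set.Icc 0 (π / 2), ((cos (θ / 2) : ℝ) : ℂ) ≠ 0 := fun θ hθ =>
    Complex.ofReal_ne_zero.2 (hcos θ hθ).ne'
  have hfc : Continuous f := continuous_iff_continuousAt.2 fun θ => (hf θ).continuousAt
  have hsin_deriv : ∀ θ, HasDerivAt (fun θ => sin (θ / 2)) (cos (θ / 2) / 2) θ := fun θ =>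
    ((hasDerivAt_id θ).div_const 2).sin.congr_deriv (by simp; ring)
  have hcos_deriv : ∀ θ, HasDerivAt (fun θ => ((cos (θ / 2) : ℝ) : ℂ))
      ((-(sin (θ / 2) / 2) : ℝ) : ℂ) θ := fun θ =>
    (((hasDerivAt_id θ).div_const 2).cos.congr_deriv (by simp; ring)).ofReal_comp
  have hlim := tendsto_integral_mul_exp_neg_mul_sq_scaled (b := -(2 * κ * Complex.I))
    (x₀ := 0) (x₁ := π / 2) (ψ := fun θ => sin (θ / 2)) (ψ' := fun θ => cos (θ / 2) / 2)
    (h := fun θ => 2 * f θ / ((cos (θ / 2) : ℝ) : ℂ))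
    (h' := fun θ => (2 * f' θ * ((cos (θ / 2) : ℝ) : ℂ) -
      2 * f θ * ((-(sin (θ / 2) / 2) : ℝ) : ℂ)) / ((cos (θ / 2) : ℝ) : ℂ) ^ 2)
    (by simp [hκ.ne']) (by simp) (by positivity)
    (fun θ hθ => ((hf θ).const_mul 2).div (hcos_deriv θ) (hcosC θ hθ))
    (ContinuousOn.div (by fun_prop) (by fun_prop) fun θ hθ => pow_ne_zero 2 (hcosC θ hθ))
    (fun θ _ => hsin_deriv θ) (by fun_prop) (by simp)
    (fun θ hθ => sin_pos_of_pos_of_lt_pi (by linarith [hθ.1]) (by linarith [hθ.2, pi_pos]))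
  simp only [zero_div, cos_zero, Complex.ofReal_one, div_one,
    cpow_half_pi_div_neg_two_mul_I hκ] at hlim
  refine ((hlim.comp tendsto_sqrt_atTop).congr' ?_).trans_eq (congrArg 𝓝 (by ring))
  filter_upwards [eventually_ge_atTop 0] with R hR
  rw [Function.comp_apply, ← intervalIntegral.integral_const_mul]
  refine intervalIntegral.integral_congr fun θ hθ => ?_
  have hne := hcosC θ (Set.uIcc_of_le (a := 0) (b := π / 2) (by positivity) ▸ hθ)
  have hphase : -(-(2 * κ * Complex.I)) * ((√R * sin (θ / 2) : ℝ) : ℂ) ^ 2 =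
      Complex.I * R * ((κ * (1 - cos θ) : ℝ) : ℂ) := by
    rw [← Complex.ofReal_pow, mul_pow, sq_sqrt hR, sin_sq_eq_half_sub,
      mul_div_cancel₀ _ two_ne_zero]
    push_cast
    ring
  simp only [hphase]
  push_cast at hne ⊢
  field_simp

lemma tendsto_setIntegral_exp_cos_mul (hκ : 0 < κ) (f : ℝ → ℂ) :
    Tendsto (fun R : ℝ => ∫ θ in Set.Ioo 0 π,
        Complex.exp (Complex.I * R * ((κ * (1 - cos θ) : ℝ) : ℂ)) * f θ) atTop (𝓝 0) := by
  refine tendsto_setIntegral_exp_phase_mul measurableSet_Ioo (ψ := fun θ => κ * (1 - cos θ))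
    (ψ' := fun θ => κ * sin θ) (fun θ _ => ?_) (fun θ hθ θ' hθ' heq => ?_)
    (fun θ hθ => (mul_pos hκ (sin_pos_of_mem_Ioo hθ)).ne') f
  · exact ((((hasDerivAt_cos θ).const_sub 1).const_mul κ).congr_deriv (by simp)).hasDerivWithinAt
  · exact injOn_cos (Set.Ioo_subset_Icc_self hθ) (Set.Ioo_subset_Icc_self hθ')
      (by simpa [hκ.ne'] using heq)

theorem tendsto_sqrt_mul_integral_exp_cos_mul (hκ : 0 < κ) (hf : ∀ θ, HasDerivAt f (f' θ) θ)
    (hf' : Continuous f') (hf0 : ∀ θ, cos θ ≤ 0 → f θ = 0) :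
    Tendsto (fun R : ℝ => (√R : ℂ) * ∫ θ in (0 : ℝ)..π,
        Complex.exp (Complex.I * R * ((κ * (1 - cos θ) : ℝ) : ℂ)) * f θ)
      atTop (𝓝 ((2 * π * Complex.I / κ) ^ (1 / 2 : ℂ) / 2 * f 0)) := by
  refine (tendsto_sqrt_mul_integral_exp_cos_mul_quarter hκ hf hf').congr fun R => ?_
  have hcont : Continuous fun θ : ℝ =>
      Complex.exp (Complex.I * R * ((κ * (1 - cos θ) : ℝ) : ℂ)) * f θ :=
    .mul (by fun_prop) (continuous_iff_continuousAt.2 fun θ => (hf θ).continuousAt)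
  have hvanish : ∫ θ in (π / 2)..π,
      Complex.exp (Complex.I * R * ((κ * (1 - cos θ) : ℝ) : ℂ)) * f θ = 0 := by
    refine intervalIntegral.integral_zero_ae (.of_forall fun θ hθ => ?_)
    rw [Set.uIoc_of_le (half_le_self pi_nonneg)] at hθ
    rw [hf0 θ (cos_nonpos_of_pi_div_two_le_of_le hθ.1.le (by linarith [hθ.2, pi_pos])), mul_zero]
  rw [← intervalIntegral.integral_add_adjacent_intervals (hcont.intervalIntegrable 0 (π / 2))
    (hcont.intervalIntegrable (π / 2) π), hvanish, add_zero]

lemma mul_integral_exp_cos_mul_sin_by_parts (hκ : κ ≠ 0) (hf : ∀ θ, HasDerivAt f (f' θ) θ)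
    (hf' : Continuous f') (hfπ : f π = 0) (R : ℝ) :
    R * ∫ θ in (0 : ℝ)..π,
        Complex.exp (Complex.I * R * ((κ * (1 - cos θ) : ℝ) : ℂ)) * (sin θ * f θ) =
      Complex.I / κ * (f 0 + ∫ θ in (0 : ℝ)..π,
        Complex.exp (Complex.I * R * ((κ * (1 - cos θ) : ℝ) : ℂ)) * f' θ) := by
  have hκC : (κ : ℂ) ≠ 0 := Complex.ofReal_ne_zero.2 hκ
  set e : ℝ → ℂ := fun θ => Complex.exp (Complex.I * R * ((κ * (1 - cos θ) : ℝ) : ℂ))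
  have he : ∀ θ ∈ Set.uIcc 0 π,
      HasDerivAt e (Complex.I * κ * R * (e θ * sin θ)) θ := fun θ _ => by
    have hphase : HasDerivAt (fun θ => κ * (1 - cos θ)) (κ * sin θ) θ :=
      (((hasDerivAt_cos θ).const_sub 1).const_mul κ).congr_deriv (by simp)
    refine (hphase.ofReal_comp.const_mul (Complex.I * R)).cexp.congr_deriv ?_
    simp only [e]
    push_cast
    ring
  have hparts : ∫ θ in (0 : ℝ)..π, e θ * f' θ =
      -f 0 - Complex.I * κ * R * ∫ θ in (0 : ℝ)..π, e θ * (sin θ * f θ) := by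
    rw [intervalIntegral.integral_mul_deriv_eq_deriv_mul he (fun θ _ => hf θ)
      (Continuous.intervalIntegrable (by fun_prop) _ _) (hf'.intervalIntegrable _ _),
      ← intervalIntegral.integral_const_mul]
    simp [e, hfπ, mul_assoc]
  rw [hparts]
  generalize ∫ θ in (0 : ℝ)..π, e θ * (sin θ * f θ) = J
  field_simp
  linear_combination R * κ * J * Complex.I_sq

theorem tendsto_mul_integral_exp_cos_mul_sin (hκ : 0 < κ) (hf : ∀ θ, HasDerivAt f (f' θ) θ)
    (hf' : Continuous f') (hfπ : f π = 0) :
    Tendsto (fun R : ℝ => R * ∫ θ in (0 : ℝ)..π,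
        Complex.exp (Complex.I * R * ((κ * (1 - cos θ) : ℝ) : ℂ)) * (sin θ * f θ))
      atTop (𝓝 (Complex.I / κ * f 0)) := by
  have hrest := (tendsto_setIntegral_exp_cos_mul hκ f').const_add (f 0)
  simp_rw [mul_integral_exp_cos_mul_sin_by_parts hκ.ne' hf hf' hfπ,
    intervalIntegral.integral_of_le pi_nonneg, integral_Ioc_eq_integral_Ioo]
  simpa using hrest.const_mul (Complex.I / κ : ℂ)

end OscillatoryIntegrals

section PolarCoordinates

lemma lintegral_volumeIoiPow (n : ℕ) {F : ℝ → ℝ≥0∞} (hF : Measurable F) :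
    ∫⁻ r : Set.Ioi (0 : ℝ), F r ∂.volumeIoiPow n =
      ∫⁻ r in Set.Ioi 0, ENNReal.ofReal (r ^ n) * F r := by
  have hdensity := lintegral_withDensity_eq_lintegral_mul
    (.comap (Subtype.val : Set.Ioi (0 : ℝ) → ℝ) volume)
    (measurable_subtype_coe.pow_const n).ennreal_ofReal (hF.comp measurable_subtype_coe)
  exact hdensity.trans <|
    lintegral_subtype_comap measurableSet_Ioi fun r => ENNReal.ofReal (r ^ n) * F r

lemma integral_volumeIoiPow {G : Type*} [NormedAddCommGroup G] [NormedSpace ℝ G] (n : ℕ)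
    (F : ℝ → G) :
    ∫ r : Set.Ioi (0 : ℝ), F r ∂.volumeIoiPow n = ∫ r in Set.Ioi 0, r ^ n • F r := by
  simp only [Measure.volumeIoiPow, ENNReal.ofReal]
  rw [integral_withDensity_eq_integral_smul
      (measurable_subtype_coe.pow_const _).real_toNNReal,
    integral_subtype_comap measurableSet_Ioi fun r => (r ^ n).toNNReal • F r]
  refine setIntegral_congr_fun measurableSet_Ioi fun r hr => ?_
  rw [NNReal.smul_def, Real.coe_toNNReal _ (pow_nonneg hr.out.le _)]

section NormedSpace

variable {E : Type*} [NormedAddCommGroup E] [NormedSpace ℝ E] [FiniteDimensional ℝ E]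
  [MeasurableSpace E] [BorelSpace E]

lemma measurableEmbedding_sphere_smul :
    MeasurableEmbedding fun p : sphere (0 : E) 1 × Set.Ioi (0 : ℝ) => (p.2 : ℝ) • (p.1 : E) :=
  (MeasurableEmbedding.subtype_coe (measurableSet_singleton (0 : E)).compl).comp
    (homeomorphUnitSphereProd E).symm.measurableEmbedding

variable [Nontrivial E] (μ : Measure E) [μ.IsAddHaarMeasure]

theorem measurePreserving_sphere_smul :
    MeasurePreserving (fun p : sphere (0 : E) 1 × Set.Ioi (0 : ℝ) => (p.2 : ℝ) • (p.1 : E))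
      (μ.toSphere.prod (.volumeIoiPow (Module.finrank ℝ E - 1))) μ := by
  have hpolar := μ.measurePreserving_homeomorphUnitSphereProd.symm
    (e := (homeomorphUnitSphereProd E).toMeasurableEquiv)
  have hcoe := measurePreserving_subtype_coe (μa := μ) (measurableSet_singleton (0 : E)).compl
  rw [restrict_compl_singleton] at hcoe
  exact hcoe.comp hpolar

lemma measurePreserving_toSphere_of_smul {Θ : Type*} [MeasurableSpace Θ] {m : Measure Θ}
    [SFinite m] {q : Θ → sphere (0 : E) 1} (hq : Measurable q)
    (h : MeasurePreserving (fun p : Θ × Set.Ioi (0 : ℝ) => (p.2 : ℝ) • (q p.1 : E))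
      (m.prod (.volumeIoiPow (Module.finrank ℝ E - 1))) μ) :
    MeasurePreserving q m μ.toSphere := by
  set n := Module.finrank ℝ E - 1
  set Φ : sphere (0 : E) 1 × Set.Ioi (0 : ℝ) → E := fun p => (p.2 : ℝ) • (p.1 : E)
  have hΦ : MeasurableEmbedding Φ := measurableEmbedding_sphere_smul
  have hmap : ((m.map q).prod (.volumeIoiPow n)).map Φ =
      (μ.toSphere.prod (.volumeIoiPow n)).map Φ := by
    rw [(measurePreserving_sphere_smul μ).map_eq, ← Measure.map_id (μ := .volumeIoiPow n),
      Measure.map_prod_map _ _ hq measurable_id,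
      Measure.map_map hΦ.measurable (hq.prodMap measurable_id)]
    exact h.map_eq
  have hprod : (m.map q).prod (.volumeIoiPow n) = μ.toSphere.prod (.volumeIoiPow n) := by
    rw [← hΦ.comap_map ((m.map q).prod _), hmap, hΦ.comap_map]
  have hunit : Measure.volumeIoiPow n (Set.Iio ⟨1, Set.mem_Ioi.2 one_pos⟩) ≠ 0 ∧
      Measure.volumeIoiPow n (Set.Iio ⟨1, Set.mem_Ioi.2 one_pos⟩) ≠ ∞ := by
    rw [Measure.volumeIoiPow_apply_Iio]
    exact ⟨by simpa using n.cast_add_one_pos, ENNReal.ofReal_ne_top⟩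
  refine ⟨hq, Measure.ext fun s _ => ?_⟩
  have hs := congrArg (· (s ×ˢ Set.Iio ⟨1, Set.mem_Ioi.2 one_pos⟩)) hprod
  simp only [Measure.prod_prod] at hs
  exact (ENNReal.mul_left_inj hunit.1 hunit.2).1 hs

theorem lintegral_eq_lintegral_toSphere {F : E → ℝ≥0∞} (hF : Measurable F) :
    ∫⁻ x, F x ∂μ = ∫⁻ q, (∫⁻ r in Set.Ioi 0,
      ENNReal.ofReal (r ^ (Module.finrank ℝ E - 1)) * F (r • (q : E))) ∂μ.toSphere := by
  rw [← (measurePreserving_sphere_smul μ).lintegral_comp hF]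
  refine (lintegral_prod _
    (hF.comp measurableEmbedding_sphere_smul.measurable).aemeasurable).trans ?_
  exact lintegral_congr fun q => lintegral_volumeIoiPow _ (F := fun r => F (r • (q : E)))
    (hF.comp (measurable_id.smul_const _))

theorem integral_eq_integral_toSphere {G : Type*} [NormedAddCommGroup G] [NormedSpace ℝ G]
    {F : E → G} (hF : Integrable F μ) :
    ∫ x, F x ∂μ = ∫ q, (∫ r in Set.Ioi (0 : ℝ),
      r ^ (Module.finrank ℝ E - 1) • F (r • (q : E))) ∂μ.toSphere := by
  have hpolar := measurePreserving_sphere_smul μ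
  rw [← hpolar.integral_comp measurableEmbedding_sphere_smul]
  refine (integral_prod _ (hpolar.integrable_comp_of_integrable hF)).trans ?_
  exact integral_congr_ae (.of_forall fun q =>
    integral_volumeIoiPow _ fun r => F (r • (q : E)))

end NormedSpace

lemma lintegral_upper_half_plane_polarCoord {F : ℝ × ℝ → ℝ≥0∞} (hF : Measurable F) :
    ∫⁻ s in Set.Ioi 0, ∫⁻ t, F (t, s) =
      ∫⁻ θ in Set.Ioo 0 π, ∫⁻ r in Set.Ioi 0,
        ENNReal.ofReal r * F (r * cos θ, r * sin θ) := by
  set H : Set (ℝ × ℝ) := Set.univ ×ˢ Set.Ioi 0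
  have hH : MeasurableSet H := MeasurableSet.univ.prod measurableSet_Ioi
  have htarget : polarCoord.target ∩ polarCoord.symm ⁻¹' H = Set.Ioi 0 ×ˢ Set.Ioo 0 π := by
    ext ⟨r, θ⟩
    simp only [polarCoord_target, polarCoord_symm_apply, H, Set.mem_inter_iff, Set.mem_prod,
      Set.mem_Ioi, Set.mem_Ioo, Set.mem_preimage, Set.mem_univ, true_and]
    refine ⟨fun h => ⟨h.1.1, ?_, h.1.2.2⟩, fun h =>
      ⟨⟨h.1, by linarith [pi_pos, h.2.1], h.2.2⟩, mul_pos h.1 (sin_pos_of_mem_Ioo h.2)⟩⟩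
    by_contra! hθ
    exact (mul_nonpos_of_nonneg_of_nonpos h.1.1.le
      (sin_nonpos_of_nonpos_of_neg_pi_le hθ h.1.2.1.le)).not_gt h.2
  calc ∫⁻ s in Set.Ioi 0, ∫⁻ t, F (t, s)
      = ∫⁻ p in H, F p := by
        rw [Measure.volume_eq_prod, ← Measure.prod_restrict, Measure.restrict_univ,
          lintegral_prod_symm _ hF.aemeasurable]
    _ = ∫⁻ p in polarCoord.target ∩ polarCoord.symm ⁻¹' H,
          ENNReal.ofReal p.1 * F (polarCoord.symm p) := by
        rw [← lintegral_indicator hH, ← lintegral_comp_polarCoord_symm, Set.inter_comm,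
          ← Measure.restrict_restrict (continuous_polarCoord_symm.measurable hH),
          ← lintegral_indicator (continuous_polarCoord_symm.measurable hH)]
        refine lintegral_congr fun p => ?_
        by_cases polarCoord.symm p ∈ H <;> simp [Set.indicator]
    _ = ∫⁻ θ in Set.Ioo 0 π, ∫⁻ r in Set.Ioi 0,
          ENNReal.ofReal r * F (r * cos θ, r * sin θ) := by
        rw [htarget, Measure.volume_eq_prod, ← Measure.prod_restrict, lintegral_prod_symm]
        · rfl
        · exact (measurable_fst.ennreal_ofReal.mul
            (hF.comp continuous_polarCoord_symm.measurable)).aemeasurable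

section InnerProductSpace

variable {E : Type*} [NormedAddCommGroup E] [InnerProductSpace ℝ E]

lemma norm_cos_smul_add_sin_smul {e q : E} (he : ‖e‖ = 1) (hq : ‖q‖ = 1) (heq : ⟪e, q⟫ = 0)
    (θ : ℝ) : ‖cos θ • e + sin θ • q‖ = 1 := by
  rw [← sq_eq_sq₀ (norm_nonneg _) zero_le_one, norm_add_sq_real]
  simp [norm_smul, inner_smul_left, inner_smul_right, he, hq, heq]

/-- The point of the unit sphere of `E` at angle `p.2` from the pole `e`, on the meridian through
the point `p.1` of the equator, which is the unit sphere of `eᗮ`. -/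
def meridianPoint {e : E} (he : ‖e‖ = 1) (p : sphere (0 : (ℝ ∙ e)ᗮ) 1 × ℝ) : sphere (0 : E) 1 :=
  ⟨cos p.2 • e + sin p.2 • (p.1 : (ℝ ∙ e)ᗮ), by
    rw [mem_sphere_zero_iff_norm]
    exact norm_cos_smul_add_sin_smul he (norm_eq_of_mem_sphere p.1)
      (Submodule.mem_orthogonal_singleton_iff_inner_right.1 (p.1 : (ℝ ∙ e)ᗮ).2) p.2⟩

variable {e : E}

lemma continuous_meridianPoint (he : ‖e‖ = 1) : Continuous (meridianPoint he) := by
  unfold meridianPoint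
  fun_prop

lemma inner_meridianPoint (he : ‖e‖ = 1) (p : sphere (0 : (ℝ ∙ e)ᗮ) 1 × ℝ) :
    ⟪e, (meridianPoint he p : E)⟫ = cos p.2 := by
  have horth : ⟪e, ((p.1 : (ℝ ∙ e)ᗮ) : E)⟫ = 0 :=
    Submodule.mem_orthogonal_singleton_iff_inner_right.1 (p.1 : (ℝ ∙ e)ᗮ).2
  simp [meridianPoint, inner_add_right, inner_smul_right, horth, he]

variable [FiniteDimensional ℝ E]

lemma finrank_eq_finrank_orthogonal_add_one (he : ‖e‖ = 1) :
    Module.finrank ℝ E = Module.finrank ℝ (ℝ ∙ e)ᗮ + 1 := by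
  have hspan := finrank_span_singleton (K := ℝ) (v := e) (by rintro rfl; simp at he)
  rw [← (ℝ ∙ e).finrank_add_finrank_orthogonal, hspan, add_comm]

lemma nontrivial_orthogonal_of_two_le_finrank (hE : 2 ≤ Module.finrank ℝ E) (he : ‖e‖ = 1) :
    Nontrivial (ℝ ∙ e)ᗮ :=
  Module.nontrivial_of_finrank_pos (R := ℝ)
    (by have := finrank_eq_finrank_orthogonal_add_one he; lia)

variable [MeasurableSpace E] [BorelSpace E]

lemma measurePreserving_smul_add_orthogonal (he : ‖e‖ = 1) :
    MeasurePreserving fun p : ℝ × (ℝ ∙ e)ᗮ => p.1 • e + (p.2 : E) := by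
  have hspan := (LinearIsometryEquiv.toSpanUnitSingleton (𝕜 := ℝ) e he).measurePreserving
  have hsum := (ℝ ∙ e).orthogonalDecomposition.symm.measurePreserving.comp
    (WithLp.volume_preserving_toLp (ℝ ∙ e) (ℝ ∙ e)ᗮ)
  exact hsum.comp (hspan.prod (.id _))

lemma lintegral_eq_lintegral_orthogonal (he : ‖e‖ = 1) {F : E → ℝ≥0∞} (hF : Measurable F) :
    ∫⁻ x, F x = ∫⁻ y : (ℝ ∙ e)ᗮ, ∫⁻ t : ℝ, F (t • e + y) := by
  rw [← (measurePreserving_smul_add_orthogonal he).lintegral_comp hF]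
  exact lintegral_prod_symm _ (by fun_prop)

lemma lintegral_eq_lintegral_meridianPoint (he : ‖e‖ = 1) [Nontrivial (ℝ ∙ e)ᗮ] {F : E → ℝ≥0∞}
    (hF : Measurable F) :
    ∫⁻ x, F x = ∫⁻ q, (∫⁻ θ in Set.Ioo 0 π,
      ENNReal.ofReal (sin θ ^ (Module.finrank ℝ (ℝ ∙ e)ᗮ - 1)) * ∫⁻ r in Set.Ioi 0,
        ENNReal.ofReal (r ^ (Module.finrank ℝ (ℝ ∙ e)ᗮ)) *
          F (r • (meridianPoint he (q, θ) : E))) ∂(volume : Measure (ℝ ∙ e)ᗮ).toSphere := by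
  set n := Module.finrank ℝ (ℝ ∙ e)ᗮ
  have hn : n = n - 1 + 1 := (Nat.sub_add_cancel Module.finrank_pos).symm
  rw [lintegral_eq_lintegral_orthogonal he hF, lintegral_eq_lintegral_toSphere volume
    (Measurable.lintegral_prod_right'
      (f := fun p : (ℝ ∙ e)ᗮ × ℝ => F (p.2 • e + p.1)) (by fun_prop))]
  refine lintegral_congr fun q => ?_
  have hG : Measurable fun p : ℝ × ℝ =>
      ENNReal.ofReal (p.2 ^ (n - 1)) * F (p.1 • e + p.2 • ((q : (ℝ ∙ e)ᗮ) : E)) := by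
    fun_prop
  calc ∫⁻ s in Set.Ioi 0, ENNReal.ofReal (s ^ (n - 1)) *
        ∫⁻ t, F (t • e + ((s • (q : (ℝ ∙ e)ᗮ) : (ℝ ∙ e)ᗮ) : E))
      = ∫⁻ s in Set.Ioi 0, ∫⁻ t,
          ENNReal.ofReal (s ^ (n - 1)) * F (t • e + s • ((q : (ℝ ∙ e)ᗮ) : E)) := by
        refine lintegral_congr fun s => ?_
        rw [← lintegral_const_mul _ (by fun_prop)]
        rfl
    _ = ∫⁻ θ in Set.Ioo 0 π, ∫⁻ r in Set.Ioi 0, ENNReal.ofReal r *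
          (ENNReal.ofReal ((r * sin θ) ^ (n - 1)) *
            F ((r * cos θ) • e + (r * sin θ) • ((q : (ℝ ∙ e)ᗮ) : E))) :=
        lintegral_upper_half_plane_polarCoord hG
    _ = _ := by
        refine setLIntegral_congr_fun measurableSet_Ioo fun θ hθ => ?_
        have hsin := sin_pos_of_mem_Ioo hθ
        rw [← lintegral_const_mul _ (by fun_prop)]
        refine setLIntegral_congr_fun measurableSet_Ioi fun r (hr : 0 < r) => ?_
        rw [← mul_assoc, ← mul_assoc, ← ENNReal.ofReal_mul hr.le,
          ← ENNReal.ofReal_mul (by positivity), mul_smul, mul_smul, ← smul_add]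
        congr 2
        conv_rhs => rw [hn]
        simp only [Nat.add_sub_cancel]
        ring

theorem measurePreserving_meridianPoint (he : ‖e‖ = 1) [Nontrivial (ℝ ∙ e)ᗮ] :
    MeasurePreserving (meridianPoint he)
      ((volume : Measure (ℝ ∙ e)ᗮ).toSphere.prod ((volume.restrict (Set.Ioo 0 π)).withDensity
        fun θ => ENNReal.ofReal (sin θ ^ (Module.finrank ℝ (ℝ ∙ e)ᗮ - 1))))
      (volume : Measure E).toSphere := by
  have : Nontrivial E := nontrivial_of_ne e 0 (by rintro rfl; simp at he)
  have hcont := continuous_meridianPoint he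
  refine measurePreserving_toSphere_of_smul volume hcont.measurable
    ⟨by fun_prop, Measure.ext_of_lintegral _ fun F hF => ?_⟩
  have hradial : ∀ p, ∫⁻ r : Set.Ioi (0 : ℝ), F ((r : ℝ) • (meridianPoint he p : E))
        ∂.volumeIoiPow (Module.finrank ℝ E - 1) =
      ∫⁻ r in Set.Ioi 0, ENNReal.ofReal (r ^ Module.finrank ℝ (ℝ ∙ e)ᗮ) *
        F (r • (meridianPoint he p : E)) := fun p => by
    rw [finrank_eq_finrank_orthogonal_add_one he, Nat.add_sub_cancel]
    exact lintegral_volumeIoiPow _ (F := fun r => F (r • (meridianPoint he p : E)))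
      (by fun_prop)
  have hmeas : Measurable fun p => ∫⁻ r in Set.Ioi 0,
      ENNReal.ofReal (r ^ Module.finrank ℝ (ℝ ∙ e)ᗮ) * F (r • (meridianPoint he p : E)) :=
    Measurable.lintegral_prod_right' (f := fun x : (sphere (0 : (ℝ ∙ e)ᗮ) 1 × ℝ) × ℝ =>
      ENNReal.ofReal (x.2 ^ Module.finrank ℝ (ℝ ∙ e)ᗮ) *
        F (x.2 • (meridianPoint he x.1 : E))) (by fun_prop)
  rw [lintegral_map hF (by fun_prop), lintegral_prod _ (by fun_prop)]
  simp_rw [hradial]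
  rw [lintegral_prod _ hmeas.aemeasurable, lintegral_eq_lintegral_meridianPoint he hF]
  refine lintegral_congr fun q => ?_
  exact lintegral_withDensity_eq_lintegral_mul _ (by fun_prop) (hmeas.comp measurable_prodMk_left)

theorem integral_toSphere_eq_integral_meridianPoint {G : Type*} [NormedAddCommGroup G]
    [NormedSpace ℝ G] (he : ‖e‖ = 1) [Nontrivial (ℝ ∙ e)ᗮ] {F : sphere (0 : E) 1 → G}
    (hF : Integrable F (volume : Measure E).toSphere) :
    ∫ q, F q ∂(volume : Measure E).toSphere = ∫ θ in Set.Ioo 0 π,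
      sin θ ^ (Module.finrank ℝ (ℝ ∙ e)ᗮ - 1) •
        ∫ q, F (meridianPoint he (q, θ)) ∂(volume : Measure (ℝ ∙ e)ᗮ).toSphere := by
  have hpres := measurePreserving_meridianPoint he
  rw [← hpres.map_eq, integral_map hpres.measurable.aemeasurable
    (by rw [hpres.map_eq]; exact hF.aestronglyMeasurable)]
  refine (integral_prod_symm _ (hpres.integrable_comp_of_integrable hF)).trans ?_
  simp only [ENNReal.ofReal]
  rw [integral_withDensity_eq_integral_smul (by fun_prop)]
  refine setIntegral_congr_fun measurableSet_Ioo fun θ hθ => ?_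
  simp only [NNReal.smul_def,
    Real.coe_toNNReal _ (pow_nonneg (sin_pos_of_mem_Ioo hθ).le _)]
  rfl

end InnerProductSpace

end PolarCoordinates

section SphereFourier

lemma hasDerivAt_integral_of_continuous {K : Type*} [TopologicalSpace K] [CompactSpace K]
    [MeasurableSpace K] [OpensMeasurableSpace K] {m : Measure K} [IsFiniteMeasure m]
    {F F' : ℝ → K → ℂ} (hF : ∀ θ, Continuous (F θ)) (hF' : Continuous (Function.uncurry F'))
    (hderiv : ∀ q θ, HasDerivAt (F · q) (F' θ q) θ) (θ : ℝ) :
    HasDerivAt (fun θ => ∫ q, F θ q ∂m) (∫ q, F' θ q ∂m) θ := by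
  obtain ⟨B, hB⟩ := ((isCompact_closedBall θ 1).prod isCompact_univ).exists_bound_of_continuousOn
    hF'.continuousOn
  refine (hasDerivAt_integral_of_dominated_loc_of_deriv_le (bound := fun _ => B)
    (closedBall_mem_nhds θ one_pos) (.of_forall fun θ' => (hF θ').aestronglyMeasurable) ?_
    (hF'.comp (by fun_prop : Continuous fun q => (θ, q))).aestronglyMeasurable ?_
    (integrable_const B) (.of_forall fun q θ' _ => hderiv q θ')).2
  · obtain ⟨B₀, hB₀⟩ := isCompact_univ.exists_bound_of_continuousOn (hF θ).continuousOn
    exact .of_bound (hF θ).aestronglyMeasurable B₀ (.of_forall fun q => hB₀ q trivial)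
  · exact .of_forall fun q θ' hθ' => hB (θ', q) ⟨hθ', trivial⟩

variable {E : Type*} [NormedAddCommGroup E] [InnerProductSpace ℝ E] [FiniteDimensional ℝ E]
  [MeasurableSpace E] [BorelSpace E] {e k : E}

/-- The Fourier transform of the measure `g dσ`, where `σ` is the surface measure of the unit
sphere. -/
def sphereFourier (g : sphere (0 : E) 1 → ℂ) (k : E) : ℂ :=
  ∫ q, g q * Complex.exp (-Complex.I * ((⟪k, (q : E)⟫ : ℝ) : ℂ)) ∂(volume : Measure E).toSphere

lemma integrable_mul_exp_neg_I_inner {h : sphere (0 : E) 1 → ℂ}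
    (hh : Integrable h (volume : Measure E).toSphere) (k : E) :
    Integrable (fun q => h q * Complex.exp (-Complex.I * ((⟪k, (q : E)⟫ : ℝ) : ℂ)))
      (volume : Measure E).toSphere :=
  hh.mul_bdd (c := 1) (by fun_prop) (.of_forall fun q => by simp [Complex.norm_exp])

lemma norm_sphereFourier_le {h : sphere (0 : E) 1 → ℂ} {B : ℝ} (hB : ∀ q, ‖h q‖ ≤ B) (k : E) :
    ‖sphereFourier h k‖ ≤ B * (volume : Measure E).toSphere.real Set.univ := by
  refine norm_integral_le_of_norm_le_const (.of_forall fun q => ?_)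
  simpa [Complex.norm_exp] using hB q

lemma sphereFourier_add {h₁ h₂ : sphere (0 : E) 1 → ℂ}
    (hh₁ : Integrable h₁ (volume : Measure E).toSphere)
    (hh₂ : Integrable h₂ (volume : Measure E).toSphere) (k : E) :
    sphereFourier (fun q => h₁ q + h₂ q) k = sphereFourier h₁ k + sphereFourier h₂ k := by
  simp only [sphereFourier, add_mul]
  exact integral_add (integrable_mul_exp_neg_I_inner hh₁ k) (integrable_mul_exp_neg_I_inner hh₂ k)

lemma sphereFourier_const_mul (a : ℂ) (h : sphere (0 : E) 1 → ℂ) (k : E) :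
    sphereFourier (fun q => a * h q) k = a * sphereFourier h k := by
  simp only [sphereFourier, mul_assoc, integral_const_mul]

/-- The integral of `g` over the parallel at angle `θ` from the pole `e`. The measure is that of
the equator: the factor by which the parallel at `θ` is smaller is not included. -/
def parallelIntegral (he : ‖e‖ = 1) (g : sphere (0 : E) 1 → ℂ) (θ : ℝ) : ℂ :=
  ∫ q, g (meridianPoint he (q, θ)) ∂(volume : Measure (ℝ ∙ e)ᗮ).toSphere

lemma exp_mul_sphereFourier (he : ‖e‖ = 1) [Nontrivial (ℝ ∙ e)ᗮ] {g : sphere (0 : E) 1 → ℂ}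
    (hg : Integrable g (volume : Measure E).toSphere) (κ R : ℝ) :
    Complex.exp (Complex.I * R * κ) * sphereFourier g ((R * κ) • e) =
      ∫ θ in Set.Ioo 0 π, Complex.exp (Complex.I * R * ((κ * (1 - cos θ) : ℝ) : ℂ)) *
        (sin θ ^ (Module.finrank ℝ (ℝ ∙ e)ᗮ - 1) * parallelIntegral he g θ) := by
  rw [sphereFourier, integral_toSphere_eq_integral_meridianPoint he
    (integrable_mul_exp_neg_I_inner hg _), ← integral_const_mul]
  congr with θ
  have hphase : Complex.exp (Complex.I * R * ((κ * (1 - cos θ) : ℝ) : ℂ)) =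
      Complex.exp (Complex.I * R * κ) * Complex.exp (-Complex.I * ((R * κ * cos θ : ℝ) : ℂ)) := by
    rw [← Complex.exp_add]
    push_cast
    ring_nf
  simp only [inner_smul_left, inner_meridianPoint, integral_mul_const, parallelIntegral, hphase,
    conj_trivial, Complex.real_smul, Complex.ofReal_pow]
  ring

lemma parallelIntegral_zero (he : ‖e‖ = 1) (f : E → ℂ) :
    parallelIntegral he (fun q => f q) 0 =
      (volume : Measure (ℝ ∙ e)ᗮ).toSphere.real Set.univ * f e := by
  simp [parallelIntegral, meridianPoint]

lemma parallelIntegral_eq_zero (he : ‖e‖ = 1) {g : sphere (0 : E) 1 → ℂ}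
    (hg : ∀ q : sphere (0 : E) 1, ⟪e, (q : E)⟫ ≤ 0 → g q = 0) {θ : ℝ} (hθ : cos θ ≤ 0) :
    parallelIntegral he g θ = 0 :=
  integral_eq_zero_of_ae <| .of_forall fun q => hg _ (by rwa [inner_meridianPoint])

lemma exists_hasDerivAt_parallelIntegral (he : ‖e‖ = 1) {f : E → ℂ} (hf : ContDiff ℝ 1 f) :
    ∃ f' : ℝ → ℂ, Continuous f' ∧
      ∀ θ, HasDerivAt (parallelIntegral he fun q => f q) (f' θ) θ := by
  let F' : ℝ → sphere (0 : (ℝ ∙ e)ᗮ) 1 → ℂ := fun θ q =>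
    fderiv ℝ f (meridianPoint he (q, θ)) (-sin θ • e + cos θ • ((q : (ℝ ∙ e)ᗮ) : E))
  have hF' : Continuous (Function.uncurry F') := by
    have hpoint : Continuous fun p : ℝ × sphere (0 : (ℝ ∙ e)ᗮ) 1 =>
        (meridianPoint he (p.2, p.1) : E) :=
      continuous_subtype_val.comp ((continuous_meridianPoint he).comp continuous_swap)
    exact ((hf.continuous_fderiv one_ne_zero).comp hpoint).clm_apply (by fun_prop)
  refine ⟨fun θ => ∫ q, F' θ q ∂(volume : Measure (ℝ ∙ e)ᗮ).toSphere, ?_,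
    hasDerivAt_integral_of_continuous (fun θ => ?_) hF' fun q θ => ?_⟩
  · simpa using continuous_parametric_integral_of_continuous hF' isCompact_univ
  · exact hf.continuous.comp (continuous_subtype_val.comp
      ((continuous_meridianPoint he).comp (by fun_prop)))
  · have hcurve : HasDerivAt (fun θ => (meridianPoint he (q, θ) : E))
        (-sin θ • e + cos θ • ((q : (ℝ ∙ e)ᗮ) : E)) θ :=
      ((hasDerivAt_cos θ).smul_const e).add
        ((hasDerivAt_sin θ).smul_const ((q : (ℝ ∙ e)ᗮ) : E))
    exact ((hf.differentiable one_ne_zero _).hasFDerivAt).comp_hasDerivAt θ hcurve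

lemma toSphere_real_univ_of_finrank_eq_one (hE : Module.finrank ℝ E = 1) :
    (volume : Measure E).toSphere.real Set.univ = 2 := by
  rw [Measure.toSphere_real_apply_univ, measureReal_def,
    InnerProductSpace.volume_ball_of_dim_odd (k := 0) (by simpa using hE), hE]
  norm_num

lemma toSphere_real_univ_of_finrank_eq_two (hE : Module.finrank ℝ E = 2) :
    (volume : Measure E).toSphere.real Set.univ = 2 * π := by
  have : Nontrivial E := Module.nontrivial_of_finrank_pos (R := ℝ) (by lia)
  rw [Measure.toSphere_real_apply_univ, measureReal_def,
    InnerProductSpace.volume_ball_of_dim_even (k := 1) (by simpa using hE), hE]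
  simp [pi_nonneg]

open scoped Pointwise in
lemma toSphere_real_singleton_of_finrank_eq_one (hE : Module.finrank ℝ E = 1)
    (q : sphere (0 : E) 1) : (volume : Measure E).toSphere.real {q} = 1 := by
  have hq : (q : E) ≠ 0 := ne_zero_of_mem_unit_sphere q
  have hemb : MeasurableEmbedding fun r : ℝ => r • (q : E) :=
    (isClosedEmbedding_smul_left hq).measurableEmbedding
  have himage : Set.Ioo (0 : ℝ) 1 • ((fun p : sphere (0 : E) 1 => (p : E)) '' {q}) =
      (fun r : ℝ => r • (q : E)) '' Set.Ioo 0 1 := by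
    simp [Set.smul_singleton]
  rw [measureReal_def, Measure.toSphere_apply' _ (measurableSet_singleton q), himage,
    volume_eq_of_finrank_eq_one hE hq, Measure.smul_apply, hemb.map_apply,
    hemb.injective.preimage_image, hE]
  simp [enorm_eq_nnnorm]

lemma tendsto_sphereFourier_zero (hE : 2 ≤ Module.finrank ℝ E) (hk : k ≠ 0)
    {g : sphere (0 : E) 1 → ℂ} (hg : Integrable g (volume : Measure E).toSphere) :
    Tendsto (fun R : ℝ => sphereFourier g (R • k)) atTop (𝓝 0) := by
  have he : ‖‖k‖⁻¹ • k‖ = 1 := by simp [norm_smul, hk]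
  have := nontrivial_orthogonal_of_two_le_finrank hE he
  rw [tendsto_zero_iff_norm_tendsto_zero]
  have hlim := (tendsto_setIntegral_exp_cos_mul (norm_pos_iff.2 hk) fun θ =>
    sin θ ^ (Module.finrank ℝ (ℝ ∙ ‖k‖⁻¹ • k)ᗮ - 1) * parallelIntegral he g θ).norm
  simp_rw [← exp_mul_sphereFourier he hg] at hlim
  simpa [Complex.norm_exp, smul_smul, hk] using hlim

variable {f : E → ℂ} {κ : ℝ}

lemma integrable_toSphere_of_continuous (hf : Continuous f) :
    Integrable (fun q : sphere (0 : E) 1 => f q) (volume : Measure E).toSphere :=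
  (hf.comp continuous_subtype_val).integrable_of_hasCompactSupport (.of_compactSpace _)

lemma exp_mul_sphereFourier_of_finrank_eq_one (hE : Module.finrank ℝ E = 1) (he : ‖e‖ = 1)
    (hf0 : f (-e) = 0) (κ R : ℝ) :
    Complex.exp (Complex.I * R * κ) * sphereFourier (fun q => f q) ((R * κ) • e) = f e := by
  let pole : sphere (0 : E) 1 := ⟨e, mem_sphere_zero_iff_norm.2 he⟩
  have hvanish : ∀ q : sphere (0 : E) 1, q ∉ ({pole} : Set _) → f q = 0 := fun q hq => by
    obtain ⟨r, hr⟩ := (finrank_eq_one_iff_of_nonzero' e (by rintro rfl; simp at he)).1 hE (q : E)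
    have hnorm := norm_eq_of_mem_sphere q
    rw [← hr, norm_smul, he, mul_one, norm_eq_abs] at hnorm
    rcases eq_or_eq_neg_of_abs_eq hnorm with rfl | rfl
    · exact absurd (Subtype.ext (by simpa using hr.symm)) hq
    · rw [← hr, neg_one_smul, hf0]
  rw [sphereFourier, ← setIntegral_eq_integral_of_forall_compl_eq_zero (s := {pole})
    fun q hq => by rw [hvanish q hq, zero_mul], integral_singleton,
    toSphere_real_singleton_of_finrank_eq_one hE, one_smul, mul_left_comm, ← Complex.exp_add]
  simp [pole, inner_smul_left, he, mul_assoc]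

lemma tendsto_exp_mul_sphereFourier_of_finrank_eq_two (hE : Module.finrank ℝ E = 2)
    (he : ‖e‖ = 1) (hκ : 0 < κ) (hf : ContDiff ℝ 1 f)
    (hf0 : ∀ q, ‖q‖ = 1 → ⟪e, q⟫ ≤ 0 → f q = 0) :
    Tendsto (fun R : ℝ => √R *
        (Complex.exp (Complex.I * R * κ) * sphereFourier (fun q => f q) ((R * κ) • e)))
      atTop (𝓝 ((2 * π * Complex.I / κ) ^ (1 / 2 : ℂ) * f e)) := by
  have hrank : Module.finrank ℝ (ℝ ∙ e)ᗮ = 1 := by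
    have := finrank_eq_finrank_orthogonal_add_one he
    lia
  have := nontrivial_orthogonal_of_two_le_finrank hE.ge he
  obtain ⟨f', hf', hderiv⟩ := exists_hasDerivAt_parallelIntegral he hf
  have hlim := tendsto_sqrt_mul_integral_exp_cos_mul hκ hderiv hf' fun θ =>
    parallelIntegral_eq_zero he fun q => hf0 q (norm_eq_of_mem_sphere q)
  simp_rw [exp_mul_sphereFourier he (integrable_toSphere_of_continuous hf.continuous), hrank,
    Nat.sub_self, pow_zero, one_mul]
  simp_rw [intervalIntegral.integral_of_le pi_nonneg, integral_Ioc_eq_integral_Ioo,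
    parallelIntegral_zero, toSphere_real_univ_of_finrank_eq_one hrank] at hlim
  convert hlim using 2
  push_cast
  ring

lemma tendsto_exp_mul_sphereFourier_of_finrank_eq_three (hE : Module.finrank ℝ E = 3)
    (he : ‖e‖ = 1) (hκ : 0 < κ) (hf : ContDiff ℝ 1 f) (hf0 : f (-e) = 0) :
    Tendsto (fun R : ℝ => R *
        (Complex.exp (Complex.I * R * κ) * sphereFourier (fun q => f q) ((R * κ) • e)))
      atTop (𝓝 (2 * π * Complex.I / κ * f e)) := by
  have hrank : Module.finrank ℝ (ℝ ∙ e)ᗮ = 2 := by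
    have := finrank_eq_finrank_orthogonal_add_one he
    lia
  have := nontrivial_orthogonal_of_two_le_finrank (hE ▸ by simp) he
  obtain ⟨f', hf', hderiv⟩ := exists_hasDerivAt_parallelIntegral he hf
  have hpole : parallelIntegral he (fun q => f q) π = 0 := by
    simp [parallelIntegral, meridianPoint, hf0]
  have hlim := tendsto_mul_integral_exp_cos_mul_sin hκ hderiv hf' hpole
  simp_rw [exp_mul_sphereFourier he (integrable_toSphere_of_continuous hf.continuous), hrank,
    Nat.add_one_sub_one, pow_one]
  simp_rw [intervalIntegral.integral_of_le pi_nonneg, integral_Ioc_eq_integral_Ioo,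
    parallelIntegral_zero, toSphere_real_univ_of_finrank_eq_two hrank] at hlim
  convert hlim using 2
  push_cast
  ring

theorem tendsto_sphereFourier
    (hE : Module.finrank ℝ E = 1 ∨ Module.finrank ℝ E = 2 ∨ Module.finrank ℝ E = 3) (hk : k ≠ 0)
    (hf : ContDiff ℝ (Module.finrank ℝ E - 1 : ℕ) f)
    (hf0 : ∀ q, ‖q‖ = 1 → ⟪k, q⟫ ≤ 0 → f q = 0) :
    Tendsto (fun R : ℝ => ((R ^ (((Module.finrank ℝ E : ℝ) - 1) / 2) : ℝ) : ℂ) *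
        (Complex.exp (Complex.I * R * ‖k‖) * sphereFourier (fun q => f q) (R • k)))
      atTop (𝓝 ((2 * π * Complex.I / ‖k‖) ^ (((Module.finrank ℝ E : ℂ) - 1) / 2) *
        f (‖k‖⁻¹ • k))) := by
  obtain ⟨κ, e, hκ, he, rfl⟩ : ∃ (κ : ℝ) (e : E), 0 < κ ∧ ‖e‖ = 1 ∧ k = κ • e :=
    ⟨‖k‖, ‖k‖⁻¹ • k, norm_pos_iff.2 hk, by simp [norm_smul, hk], by simp [smul_smul, hk]⟩
  have hnorm : ‖κ • e‖ = κ := by rw [norm_smul, he, mul_one, norm_of_nonneg hκ.le]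
  have hback : ∀ q, ‖q‖ = 1 → ⟪e, q⟫ ≤ 0 → f q = 0 := fun q hq hle =>
    hf0 q hq (by rw [real_inner_smul_left]; exact mul_nonpos_of_nonneg_of_nonpos hκ.le hle)
  have hpole : f (-e) = 0 := hback _ (by rwa [norm_neg]) (by simp [inner_neg_right, he])
  simp_rw [hnorm, smul_smul, inv_mul_cancel₀ hκ.ne', one_smul]
  rcases hE with hE | hE | hE <;> simp only [hE] at hf ⊢
  · simp [exp_mul_sphereFourier_of_finrank_eq_one hE he hpole]
  · convert tendsto_exp_mul_sphereFourier_of_finrank_eq_two hE he hκ hf hback using 4 with R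
    · rw [sqrt_eq_rpow]
      norm_num
    · norm_num
  · convert tendsto_exp_mul_sphereFourier_of_finrank_eq_three hE he hκ
      (hf.of_le (by norm_num)) hpole using 4 with R
    · norm_num
    · norm_num

end SphereFourier

section ShellWeight

/-- The factor which the shell operator and the polar Jacobian `r ^ (d - 1)` produce together, at
radius `r = R + z`; it vanishes off the shell `0 < r < 2 * R`. -/
def shellWeight (d : ℕ) (R z : ℝ) : ℝ :=
  Set.indicator (Set.Ioo (-R) R) (fun z => R ^ (-(((d : ℝ) - 1) / 2)) * (R + z) ^ (d - 1)) z

/-- The error in the expansion of `shellWeight d R z` to first order in `z`. -/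
def shellRemainder (d : ℕ) (R z : ℝ) : ℝ :=
  shellWeight d R z - R ^ (((d : ℝ) - 1) / 2) -
    R ^ (((d : ℝ) - 1) / 2 - 1) * (((d : ℝ) - 1) * z)

variable {d : ℕ} {R : ℝ}

lemma measurable_shellWeight (d : ℕ) (R : ℝ) : Measurable (shellWeight d R) :=
  Measurable.indicator (by fun_prop) measurableSet_Ioo

lemma measurable_shellRemainder (d : ℕ) (R : ℝ) : Measurable (shellRemainder d R) :=
  ((measurable_shellWeight d R).sub_const _).sub (by fun_prop)

lemma shellRemainder_of_abs_lt (hd : d = 1 ∨ d = 2 ∨ d = 3) {z : ℝ} (hz : |z| < R) :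
    shellRemainder d R z = ((d : ℝ) - 1) * (d - 2) / 2 * (z ^ 2 / R) := by
  have hR : 0 < R := (abs_nonneg z).trans_lt hz
  rw [shellRemainder, shellWeight, Set.indicator_of_mem (Set.mem_Ioo.2 (abs_lt.1 hz)),
    rpow_sub_one hR.ne', rpow_neg hR.le]
  have hsqrt : √R * √R = R := mul_self_sqrt hR.le
  have : 0 < √R := sqrt_pos.2 hR
  rcases hd with rfl | rfl | rfl
  · simp
  · norm_num [← sqrt_eq_rpow]
    field_simp
    linear_combination (-R - z) * hsqrt
  · norm_num
    field_simp
    ring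

lemma sub_one_mul_abs_le (hd : d = 1 ∨ d = 2 ∨ d = 3) (z : ℝ) :
    ((d : ℝ) - 1) * |z| ≤ 2 * (1 + |z|) ^ (d - 1) := by
  have := abs_nonneg z
  rcases hd with rfl | rfl | rfl <;> norm_num <;> nlinarith

lemma abs_shellRemainder_le_of_le_abs (hd : d = 1 ∨ d = 2 ∨ d = 3) (hR : 1 ≤ R) {z : ℝ}
    (hz : R ≤ |z|) : |shellRemainder d R z| ≤ 3 * (1 + |z|) ^ (d - 1) := by
  have hd1 : (1 : ℝ) ≤ d := by rcases hd with rfl | rfl | rfl <;> norm_num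
  have hd3 : (d : ℝ) ≤ 3 := by rcases hd with rfl | rfl | rfl <;> norm_num
  have hmem : z ∉ Set.Ioo (-R) R := fun h => hz.not_gt (abs_lt.2 h)
  have hzero : R ^ (((d : ℝ) - 1) / 2) ≤ (1 + |z|) ^ (d - 1) := calc
    R ^ (((d : ℝ) - 1) / 2) ≤ R ^ ((d - 1 : ℕ) : ℝ) := by
      refine rpow_le_rpow_of_exponent_le hR ?_
      rw [Nat.cast_sub (by exact_mod_cast hd1)]
      push_cast
      linarith
    _ ≤ (1 + |z|) ^ (d - 1) := by
      rw [rpow_natCast]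
      gcongr
      linarith
  have hone : R ^ (((d : ℝ) - 1) / 2 - 1) ≤ 1 := rpow_le_one_of_one_le_of_nonpos hR (by linarith)
  calc |shellRemainder d R z|
      = |R ^ (((d : ℝ) - 1) / 2) + R ^ (((d : ℝ) - 1) / 2 - 1) * (((d : ℝ) - 1) * z)| := by
        rw [shellRemainder, shellWeight, Set.indicator_of_notMem hmem, ← abs_neg]
        ring_nf
    _ ≤ R ^ (((d : ℝ) - 1) / 2) + R ^ (((d : ℝ) - 1) / 2 - 1) * (((d : ℝ) - 1) * |z|) := by
        refine (abs_add_le _ _).trans_eq ?_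
        rw [abs_mul, abs_mul, abs_of_nonneg (by positivity), abs_of_nonneg (by positivity),
          abs_of_nonneg (sub_nonneg.2 hd1)]
    _ ≤ (1 + |z|) ^ (d - 1) + 1 * (2 * (1 + |z|) ^ (d - 1)) := by
        have := mul_nonneg (sub_nonneg.2 hd1) (abs_nonneg z)
        gcongr ?_ + ?_
        exact mul_le_mul hone (sub_one_mul_abs_le hd z) this zero_le_one
    _ = 3 * (1 + |z|) ^ (d - 1) := by ring

lemma abs_shellRemainder_le (hd : d = 1 ∨ d = 2 ∨ d = 3) (hR : 1 ≤ R) (z : ℝ) :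
    |shellRemainder d R z| ≤ 3 * (1 + |z|) ^ (d - 1) := by
  rcases lt_or_ge |z| R with hz | hz
  · have hsq : |z ^ 2 / R| ≤ 3 * (1 + |z|) ^ 2 := by
      rw [abs_of_nonneg (by positivity), ← sq_abs]
      refine (div_le_self (sq_nonneg _) hR).trans ?_
      nlinarith [abs_nonneg z]
    rw [shellRemainder_of_abs_lt hd hz]
    rcases hd with rfl | rfl | rfl
    · norm_num
    · norm_num
      positivity
    · norm_num
      exact hsq
  · exact abs_shellRemainder_le_of_le_abs hd hR hz

lemma tendsto_shellRemainder (hd : d = 1 ∨ d = 2 ∨ d = 3) (z : ℝ) :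
    Tendsto (shellRemainder d · z) atTop (𝓝 0) := by
  have hlim : Tendsto (fun R : ℝ => ((d : ℝ) - 1) * (d - 2) / 2 * (z ^ 2 / R)) atTop (𝓝 0) := by
    simpa using (tendsto_const_nhds (x := z ^ 2)).div_atTop tendsto_id |>.const_mul _
  refine hlim.congr' ?_
  filter_upwards [eventually_gt_atTop |z|] with R hR
  exact (shellRemainder_of_abs_lt hd hR).symm

end ShellWeight

section RadialFourier

lemma integrable_mul_of_norm_le {v : ℝ → ℂ} {ν g : ℝ → ℝ} (hv : Measurable v)
    (hvν : ∀ z, ‖v z‖ ≤ ν z) (hgm : Measurable g) (hg : Integrable fun z => |g z| * ν z) :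
    Integrable fun z => (g z : ℂ) * v z := by
  refine hg.mono' (by fun_prop) (.of_forall fun z => ?_)
  rw [norm_mul, Complex.norm_real, norm_eq_abs]
  gcongr
  exact hvν z

variable {E : Type*} [NormedAddCommGroup E] [InnerProductSpace ℝ E]

/-- The Fourier transform of `z ↦ g z * V z q` at the frequency `⟪k, q⟫`: the contribution of the
direction `q` to the Fourier transform at `k` of a field with radial profile `g z * V z q`. -/
def radialFourier (V : ℝ → E → ℂ) (k : E) (g : ℝ → ℝ) (q : E) : ℂ :=
  fourier1 (fun z => g z * V z q) ⟪k, q⟫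

variable {V : ℝ → E → ℂ} {ν g g₁ g₂ : ℝ → ℝ} {q : E}

lemma norm_exp_neg_I_mul_mul (ξ z : ℝ) :
    ‖Complex.exp (-Complex.I * (ξ : ℂ) * (z : ℂ))‖ = 1 := by
  simp [Complex.norm_exp]

lemma norm_radialFourier_le (hVν : ∀ z, ‖V z q‖ ≤ ν z) (hg : Integrable fun z => |g z| * ν z)
    (k : E) : ‖radialFourier V k g q‖ ≤ ∫ z, |g z| * ν z := by
  refine norm_integral_le_of_norm_le hg (.of_forall fun z => ?_)
  rw [norm_mul, norm_mul, norm_exp_neg_I_mul_mul, mul_one, Complex.norm_real, norm_eq_abs]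
  gcongr
  exact hVν z

lemma radialFourier_add (h₁ : Integrable fun z => (g₁ z : ℂ) * V z q)
    (h₂ : Integrable fun z => (g₂ z : ℂ) * V z q) (k : E) :
    radialFourier V k (g₁ + g₂) q = radialFourier V k g₁ q + radialFourier V k g₂ q := by
  have hmod : ∀ {h : ℝ → ℂ}, Integrable h → Integrable fun z : ℝ =>
      h z * Complex.exp (-Complex.I * ((⟪k, q⟫ : ℝ) : ℂ) * (z : ℂ)) := fun hh =>
    hh.mul_bdd (c := 1) (by fun_prop) (.of_forall fun z => (norm_exp_neg_I_mul_mul _ z).le)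
  simp only [radialFourier, fourier1]
  rw [← integral_add (hmod h₁) (hmod h₂)]
  congr with z
  push_cast [Pi.add_apply]
  ring

lemma radialFourier_const_mul (a : ℝ) (k : E) :
    radialFourier V k (fun z => a * g z) q = a * radialFourier V k g q := by
  simp only [radialFourier, fourier1]
  rw [← integral_const_mul]
  congr with z
  push_cast
  ring

variable [MeasurableSpace E] [FiniteDimensional ℝ E] [BorelSpace E]

lemma integrable_radialFourier (hV : Measurable (Function.uncurry V))
    (hVν : ∀ z q, ‖q‖ = 1 → ‖V z q‖ ≤ ν z) (hgm : Measurable g)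
    (hg : Integrable fun z => |g z| * ν z) (k : E) :
    Integrable (fun q : sphere (0 : E) 1 => radialFourier V k g q)
      (volume : Measure E).toSphere := by
  have hjoint : Measurable (Function.uncurry fun (q : sphere (0 : E) 1) (z : ℝ) =>
      (g z : ℂ) * V z q * Complex.exp (-Complex.I * ((⟪k, (q : E)⟫ : ℝ) : ℂ) * (z : ℂ))) := by
    have : Measurable fun p : sphere (0 : E) 1 × ℝ => V p.2 p.1 :=
      hV.comp (by fun_prop : Measurable fun p : sphere (0 : E) 1 × ℝ => (p.2, (p.1 : E)))
    fun_prop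
  exact .of_bound hjoint.stronglyMeasurable.integral_prod_right.aestronglyMeasurable _
    (.of_forall fun q => norm_radialFourier_le (fun z => hVν z q (norm_eq_of_mem_sphere q)) hg k)

lemma sphereFourier_radialFourier_const_mul (a : ℝ) (k p : E) :
    sphereFourier (fun q => radialFourier V k (fun z => a * g z) q) p =
      a * sphereFourier (fun q => radialFourier V k g q) p := by
  simp only [radialFourier_const_mul, sphereFourier_const_mul]

lemma sphereFourier_radialFourier_add (hV : Measurable (Function.uncurry V))
    (hVν : ∀ z q, ‖q‖ = 1 → ‖V z q‖ ≤ ν z) (hg₁m : Measurable g₁) (hg₂m : Measurable g₂)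
    (hg₁ : Integrable fun z => |g₁ z| * ν z) (hg₂ : Integrable fun z => |g₂ z| * ν z) (k p : E) :
    sphereFourier (fun q => radialFourier V k (g₁ + g₂) q) p =
      sphereFourier (fun q => radialFourier V k g₁ q) p +
        sphereFourier (fun q => radialFourier V k g₂ q) p := by
  rw [← sphereFourier_add (integrable_radialFourier hV hVν hg₁m hg₁ k)
    (integrable_radialFourier hV hVν hg₂m hg₂ k)]
  congr with q
  have hVq : Measurable fun z => V z q := hV.comp measurable_prodMk_right
  have hVqν : ∀ z, ‖V z q‖ ≤ ν z := fun z => hVν z q (norm_eq_of_mem_sphere q)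
  exact radialFourier_add (integrable_mul_of_norm_le hVq hVqν hg₁m hg₁)
    (integrable_mul_of_norm_le hVq hVqν hg₂m hg₂) k

lemma tendsto_sphereFourier_radialFourier (hVν : ∀ z q, ‖q‖ = 1 → ‖V z q‖ ≤ ν z)
    (hνm : Measurable ν) (hν0 : ∀ z, 0 ≤ ν z) {w : ℝ → ℝ → ℝ} {G : ℝ → ℝ}
    (hwm : ∀ R, Measurable (w R)) (hlim : ∀ z, Tendsto (w · z) atTop (𝓝 0))
    (hwG : ∀ᶠ R in atTop, ∀ z, |w R z| ≤ G z) (hG : Integrable fun z => G z * ν z)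
    (k : E) (p : ℝ → E) :
    Tendsto (fun R => sphereFourier (fun q => radialFourier V k (w R) q) (p R))
      atTop (𝓝 0) := by
  have hmeas : ∀ R, Measurable fun z => |w R z| * ν z := fun R => (hwm R).abs.mul hνm
  have hdom : ∀ᶠ R in atTop, ∀ z, ‖|w R z| * ν z‖ ≤ G z * ν z := by
    filter_upwards [hwG] with R hR z
    rw [norm_of_nonneg (mul_nonneg (abs_nonneg _) (hν0 z))]
    exact mul_le_mul_of_nonneg_right (hR z) (hν0 z)
  have hL1 : Tendsto (fun R => ∫ z, |w R z| * ν z) atTop (𝓝 0) := by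
    simpa using tendsto_integral_filter_of_dominated_convergence _
      (.of_forall fun R => (hmeas R).aestronglyMeasurable)
      (hdom.mono fun R hR => .of_forall hR) hG
      (.of_forall fun z => (hlim z).abs.mul_const (ν z))
  refine squeeze_zero_norm' (hdom.mono fun R hR => norm_sphereFourier_le (fun q => ?_) (p R))
    (by simpa using hL1.mul_const ((volume : Measure E).toSphere.real Set.univ))
  exact norm_radialFourier_le (fun z => hVν z q (norm_eq_of_mem_sphere q))
    (hG.mono' (hmeas R).aestronglyMeasurable (.of_forall hR)) k

end RadialFourier

section Shell

variable {d : ℕ}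

/-- The shell operator at a fixed time, in terms of the radius `R = c * t` of the shell. -/
def shell (d : ℕ) (R : ℝ) (V : ℝ → EuclideanSpace ℝ (Fin d) → ℂ)
    (x : EuclideanSpace ℝ (Fin d)) : ℂ :=
  ((R ^ (-(((d : ℝ) - 1) / 2)) * Set.indicator {y : EuclideanSpace ℝ (Fin d) | ‖y‖ < 2 * R}
    (fun _ => (1 : ℝ)) x : ℝ) : ℂ) * V (‖x‖ - R) (‖x‖⁻¹ • x)

variable {V : ℝ → EuclideanSpace ℝ (Fin d) → ℂ} {R : ℝ}

lemma integrable_shell (hd : d ≠ 0) (hV : Measurable (Function.uncurry V)) {B : ℝ}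
    (hB : ∀ z q, ‖q‖ = 1 → ‖V z q‖ ≤ B) (R : ℝ) : Integrable (shell d R V) := by
  have : NeZero d := ⟨hd⟩
  let s : Set (EuclideanSpace ℝ (Fin d)) := {y | ‖y‖ < 2 * R}
  have hs : MeasurableSet s := measurableSet_lt measurable_norm measurable_const
  have hsfin : volume s < ∞ :=
    (measure_mono fun y hy => mem_ball_zero_iff.2 hy).trans_lt (measure_ball_lt_top (r := 2 * R))
  have hcomp : Measurable fun x : EuclideanSpace ℝ (Fin d) => V (‖x‖ - R) (‖x‖⁻¹ • x) :=
    hV.comp (by fun_prop : Measurable fun x : EuclideanSpace ℝ (Fin d) => (‖x‖ - R, ‖x‖⁻¹ • x))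
  have hint : IntegrableOn (fun x : EuclideanSpace ℝ (Fin d) => V (‖x‖ - R) (‖x‖⁻¹ • x)) s := by
    refine Measure.integrableOn_of_bounded hsfin.ne hcomp.aestronglyMeasurable
      (ae_restrict_of_ae ?_) (M := B)
    filter_upwards [compl_mem_ae_iff.2 (measure_singleton (0 : EuclideanSpace ℝ (Fin d)))] with x hx
    exact hB _ _ (by simp [norm_smul, Set.mem_compl_singleton_iff.1 hx])
  refine ((hint.integrable_indicator hs).const_mul
    ((R ^ (-(((d : ℝ) - 1) / 2)) : ℝ) : ℂ)).congr (.of_forall fun x => ?_)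
  by_cases hx : x ∈ s <;> simp [shell, s, hx]

lemma pow_mul_shell_smul {q : EuclideanSpace ℝ (Fin d)} (hq : ‖q‖ = 1) {r : ℝ} (hr : 0 < r) :
    ((r ^ (d - 1) : ℝ) : ℂ) * shell d R V (r • q) =
      shellWeight d R (r - R) * V (r - R) q := by
  have hnorm : ‖r • q‖ = r := by rw [norm_smul, hq, mul_one, norm_of_nonneg hr.le]
  have hmem : r - R ∈ Set.Ioo (-R) R ↔ r < 2 * R := by
    simp only [Set.mem_Ioo]
    constructor
    · intro h
      linarith
    · intro h
      constructor <;> linarith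
  by_cases h : r < 2 * R
  · simp [shell, shellWeight, hnorm, smul_smul, hr.ne', h, hmem, -Set.mem_Ioo]
    ring
  · simp [shell, shellWeight, hnorm, h, hmem, -Set.mem_Ioo]

lemma fourierD_shell (hd : d ≠ 0) (hV : Measurable (Function.uncurry V)) {B : ℝ}
    (hB : ∀ z q, ‖q‖ = 1 → ‖V z q‖ ≤ B) (k : EuclideanSpace ℝ (Fin d)) :
    fourierD d (shell d R V) k =
      sphereFourier (fun q => radialFourier V k (shellWeight d R) q) (R • k) := by
  have : NeZero d := ⟨hd⟩
  have hint : Integrable fun x => shell d R V x * Complex.exp (-Complex.I * ((⟪k, x⟫ : ℝ) : ℂ)) :=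
    (integrable_shell hd hV hB R).mul_bdd (c := 1) (by fun_prop)
      (.of_forall fun x => by simp [Complex.norm_exp])
  rw [fourierD, integral_eq_integral_toSphere volume hint, sphereFourier]
  congr with q
  have hq : ‖(q : EuclideanSpace ℝ (Fin d))‖ = 1 := norm_eq_of_mem_sphere q
  let φ : ℝ → ℂ := fun z => shellWeight d R z * V z q *
    Complex.exp (-Complex.I * ((⟪k, q⟫ : ℝ) : ℂ) * (z : ℂ)) *
      Complex.exp (-Complex.I * ((⟪R • k, q⟫ : ℝ) : ℂ))
  calc ∫ r in Set.Ioi (0 : ℝ), r ^ (Module.finrank ℝ (EuclideanSpace ℝ (Fin d)) - 1) •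
        (shell d R V (r • (q : EuclideanSpace ℝ (Fin d))) * Complex.exp (-Complex.I *
          ((⟪k, r • (q : EuclideanSpace ℝ (Fin d))⟫ : ℝ) : ℂ)))
      = ∫ r in Set.Ioi (0 : ℝ), φ (r - R) := by
        refine setIntegral_congr_fun measurableSet_Ioi fun r hr => ?_
        simp only [φ]
        rw [← pow_mul_shell_smul hq hr, finrank_euclideanSpace_fin, Complex.real_smul,
          mul_assoc _ (Complex.exp _), ← Complex.exp_add, ← mul_assoc]
        congr 2
        rw [real_inner_smul_left, real_inner_smul_right]
        push_cast
        ring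
    _ = ∫ r : ℝ, φ (r - R) := by
        refine setIntegral_eq_integral_of_forall_compl_eq_zero fun r hr => ?_
        have : r - R ∉ Set.Ioo (-R) R := fun h => hr (by simpa using h.1)
        simp [φ, shellWeight, this, -Set.mem_Ioo]
    _ = ∫ z : ℝ, φ z := integral_sub_right_eq_self φ R
    _ = _ := by simp only [φ, integral_mul_const, radialFourier, fourier1]

variable {ν : ℝ → ℝ}

lemma integrable_abs_mul_of_abs_le (hνm : Measurable ν) (hν0 : ∀ z, 0 ≤ ν z)
    (hν : Integrable fun z => (1 + |z|) ^ (d - 1) * ν z) {g : ℝ → ℝ} (hgm : Measurable g) {a : ℝ}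
    (hg : ∀ z, |g z| ≤ a * (1 + |z|) ^ (d - 1)) : Integrable fun z => |g z| * ν z := by
  refine (hν.const_mul a).mono' (by fun_prop) (.of_forall fun z => ?_)
  rw [norm_of_nonneg (mul_nonneg (abs_nonneg _) (hν0 z)), ← mul_assoc]
  exact mul_le_mul_of_nonneg_right (hg z) (hν0 z)

lemma abs_sub_one_mul_le (hd : d = 1 ∨ d = 2 ∨ d = 3) (z : ℝ) :
    |((d : ℝ) - 1) * z| ≤ 2 * (1 + |z|) ^ (d - 1) := by
  have hd1 : (1 : ℝ) ≤ d := by rcases hd with rfl | rfl | rfl <;> norm_num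
  rw [abs_mul, abs_of_nonneg (sub_nonneg.2 hd1)]
  exact sub_one_mul_abs_le hd z

lemma sphereFourier_radialFourier_shellWeight (hd : d = 1 ∨ d = 2 ∨ d = 3)
    (hV : Measurable (Function.uncurry V)) (hVν : ∀ z q, ‖q‖ = 1 → ‖V z q‖ ≤ ν z)
    (hνm : Measurable ν) (hν0 : ∀ z, 0 ≤ ν z) (hν : Integrable fun z => (1 + |z|) ^ (d - 1) * ν z)
    (hR : 1 ≤ R) (k p : EuclideanSpace ℝ (Fin d)) :
    sphereFourier (fun q => radialFourier V k (shellWeight d R) q) p =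
      ((R ^ (((d : ℝ) - 1) / 2) : ℝ) : ℂ) *
          sphereFourier (fun q => radialFourier V k (fun _ => 1) q) p +
        ((R ^ (((d : ℝ) - 1) / 2 - 1) : ℝ) : ℂ) *
          sphereFourier (fun q => radialFourier V k (fun z => ((d : ℝ) - 1) * z) q) p +
        sphereFourier (fun q => radialFourier V k (shellRemainder d R) q) p := by
  have hone : Integrable fun z => |(1 : ℝ)| * ν z :=
    integrable_abs_mul_of_abs_le hνm hν0 hν (a := 1) measurable_const fun z => by
      simpa using one_le_pow₀ (le_add_of_nonneg_right (abs_nonneg z))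
  have hlin : Integrable fun z => |((d : ℝ) - 1) * z| * ν z :=
    integrable_abs_mul_of_abs_le hνm hν0 hν (by fun_prop) (abs_sub_one_mul_le hd)
  have hrem : Integrable fun z => |shellRemainder d R z| * ν z :=
    integrable_abs_mul_of_abs_le hνm hν0 hν (measurable_shellRemainder d R)
      (abs_shellRemainder_le hd hR)
  let w₀ : ℝ → ℝ := fun _ => R ^ (((d : ℝ) - 1) / 2) * 1
  let w₁ : ℝ → ℝ := fun z => R ^ (((d : ℝ) - 1) / 2 - 1) * (((d : ℝ) - 1) * z)
  have hw₀m : Measurable w₀ := by fun_prop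
  have hw₁m : Measurable w₁ := by fun_prop
  have hw₀ : Integrable fun z => |w₀ z| * ν z := by
    simpa only [w₀, abs_mul, mul_assoc] using hone.const_mul |R ^ (((d : ℝ) - 1) / 2)|
  have hw₁ : Integrable fun z => |w₁ z| * ν z := by
    simpa only [w₁, abs_mul, mul_assoc] using hlin.const_mul |R ^ (((d : ℝ) - 1) / 2 - 1)|
  have hsplit : shellWeight d R = w₀ + w₁ + shellRemainder d R := by
    funext z
    simp only [Pi.add_apply, shellRemainder, w₀, w₁]
    ring
  have hw₀₁ : Integrable fun z => |(w₀ + w₁) z| * ν z := by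
    refine (hw₀.add hw₁).mono' (by fun_prop) (.of_forall fun z => ?_)
    rw [norm_of_nonneg (mul_nonneg (abs_nonneg _) (hν0 z)), Pi.add_apply, Pi.add_apply, ← add_mul]
    exact mul_le_mul_of_nonneg_right (abs_add_le _ _) (hν0 z)
  rw [hsplit, sphereFourier_radialFourier_add hV hVν (hw₀m.add hw₁m)
    (measurable_shellRemainder d R) hw₀₁ hrem, sphereFourier_radialFourier_add hV hVν hw₀m hw₁m
    hw₀ hw₁, sphereFourier_radialFourier_const_mul,
    sphereFourier_radialFourier_const_mul]

lemma tendsto_sphereFourier_radialFourier_sub_one_mul (hd : d = 1 ∨ d = 2 ∨ d = 3)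
    (hV : Measurable (Function.uncurry V)) (hVν : ∀ z q, ‖q‖ = 1 → ‖V z q‖ ≤ ν z)
    (hνm : Measurable ν) (hν0 : ∀ z, 0 ≤ ν z) (hν : Integrable fun z => (1 + |z|) ^ (d - 1) * ν z)
    {k : EuclideanSpace ℝ (Fin d)} (hk : k ≠ 0) :
    Tendsto (fun R : ℝ => sphereFourier
      (fun q => radialFourier V k (fun z => ((d : ℝ) - 1) * z) q) (R • k)) atTop (𝓝 0) := by
  obtain rfl | hd2 : d = 1 ∨ 2 ≤ d := by lia
  · simp [radialFourier, fourier1, sphereFourier]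
  · exact tendsto_sphereFourier_zero (by rwa [finrank_euclideanSpace_fin]) hk
      (integrable_radialFourier hV hVν (by fun_prop) (integrable_abs_mul_of_abs_le hνm hν0 hν
        (by fun_prop) (abs_sub_one_mul_le hd)) k)

lemma tendsto_sphereFourier_radialFourier_shellWeight_sub (hd : d = 1 ∨ d = 2 ∨ d = 3)
    (hV : Measurable (Function.uncurry V)) (hVν : ∀ z q, ‖q‖ = 1 → ‖V z q‖ ≤ ν z)
    (hνm : Measurable ν) (hν0 : ∀ z, 0 ≤ ν z) (hν : Integrable fun z => (1 + |z|) ^ (d - 1) * ν z)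
    {k : EuclideanSpace ℝ (Fin d)} (hk : k ≠ 0) :
    Tendsto (fun R : ℝ =>
      sphereFourier (fun q => radialFourier V k (shellWeight d R) q) (R • k) -
        ((R ^ (((d : ℝ) - 1) / 2) : ℝ) : ℂ) *
          sphereFourier (fun q => radialFourier V k (fun _ => 1) q) (R • k)) atTop (𝓝 0) := by
  have hlin := tendsto_sphereFourier_radialFourier_sub_one_mul hd hV hVν hνm hν0 hν hk
  have hrem : Tendsto (fun R : ℝ =>
      sphereFourier (fun q => radialFourier V k (shellRemainder d R) q) (R • k)) atTop (𝓝 0) :=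
    tendsto_sphereFourier_radialFourier hVν hνm hν0 (measurable_shellRemainder d)
      (tendsto_shellRemainder hd)
      ((eventually_ge_atTop 1).mono fun R hR => abs_shellRemainder_le hd hR)
      (by simpa only [mul_assoc] using hν.const_mul 3) k _
  refine squeeze_zero_norm' ?_ (by simpa using hlin.norm.add hrem.norm)
  filter_upwards [eventually_ge_atTop 1] with R hR
  have hcoef : R ^ (((d : ℝ) - 1) / 2 - 1) ≤ 1 := by
    refine rpow_le_one_of_one_le_of_nonpos hR ?_
    rcases hd with rfl | rfl | rfl <;> norm_num
  rw [sphereFourier_radialFourier_shellWeight hd hV hVν hνm hν0 hν hR, add_assoc,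
    add_sub_cancel_left]
  refine (norm_add_le _ _).trans (add_le_add_left ?_ _)
  rw [norm_mul, Complex.norm_real, norm_of_nonneg (by positivity)]
  exact mul_le_of_le_one_left (norm_nonneg _) hcoef

theorem tendsto_exp_mul_fourierD_shell (hd : d = 1 ∨ d = 2 ∨ d = 3)
    (hV : Measurable (Function.uncurry V)) (hVν : ∀ z q, ‖q‖ = 1 → ‖V z q‖ ≤ ν z)
    (hνm : Measurable ν) (hν0 : ∀ z, 0 ≤ ν z) (hν : Integrable fun z => (1 + |z|) ^ (d - 1) * ν z)
    {B : ℝ} (hνB : ∀ z, ν z ≤ B) {k : EuclideanSpace ℝ (Fin d)} (hk : k ≠ 0)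
    {f : EuclideanSpace ℝ (Fin d) → ℂ} (hf : ContDiff ℝ (d - 1 : ℕ) f)
    (hf0 : ∀ q, ‖q‖ = 1 → ⟪k, q⟫ ≤ 0 → f q = 0)
    (hfV : ∀ q, ‖q‖ = 1 → fourier1 (V · q) ⟪k, q⟫ = f q) :
    Tendsto (fun R : ℝ => Complex.exp (Complex.I * R * ‖k‖) * fourierD d (shell d R V) k)
      atTop (𝓝 ((2 * π * Complex.I / ‖k‖) ^ (((d : ℂ) - 1) / 2) * f (‖k‖⁻¹ • k))) := by
  have hlead := tendsto_sphereFourier (by simpa using hd) hk (by simpa using hf) hf0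
  simp only [finrank_euclideanSpace_fin] at hlead
  have herror : Tendsto (fun R : ℝ => Complex.exp (Complex.I * R * ‖k‖) *
      (sphereFourier (fun q => radialFourier V k (shellWeight d R) q) (R • k) -
        ((R ^ (((d : ℝ) - 1) / 2) : ℝ) : ℂ) *
          sphereFourier (fun q => radialFourier V k (fun _ => 1) q) (R • k))) atTop (𝓝 0) := by
    refine squeeze_zero_norm (fun R => le_of_eq ?_)
      (tendsto_sphereFourier_radialFourier_shellWeight_sub hd hV hVν hνm hν0 hν hk
        |>.norm.trans_eq (by rw [norm_zero]))
    simp [Complex.norm_exp]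
  have hone : ∀ q : sphere (0 : EuclideanSpace ℝ (Fin d)) 1,
      radialFourier V k (fun _ => 1) q = f q := fun q => by
    simpa [radialFourier] using hfV q (norm_eq_of_mem_sphere q)
  simp only [hone] at herror
  refine ((hlead.add herror).congr fun R => ?_).trans_eq (by rw [add_zero])
  rw [fourierD_shell (by lia) hV fun z q hq => (hVν z q hq).trans (hνB z)]
  ring

end Shell

section FourierInversion

open scoped FourierTransform

lemma fourierInv_eq_two_pi_mul_invFourier1 (g : ℝ → ℂ) (y : ℝ) :
    𝓕⁻ g y = ((2 * π : ℝ) : ℂ) * invFourier1 g (2 * π * y) := by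
  have hpi : ((2 * π : ℝ) : ℂ) ≠ 0 := Complex.ofReal_ne_zero.2 two_pi_pos.ne'
  rw [fourierInv_eq', invFourier1, mul_inv_cancel_left₀ hpi]
  congr with v
  simp only [smul_eq_mul, RCLike.inner_apply, conj_trivial]
  congr 2
  push_cast
  ring

lemma fourier1_eq_fourier (f : ℝ → ℂ) (ξ : ℝ) :
    fourier1 f ξ = 𝓕 (fun y : ℝ => ((2 * π : ℝ) : ℂ) * f (2 * π * y)) ξ := by
  have hscale := Measure.integral_comp_mul_left
    (fun z : ℝ => f z * Complex.exp (-Complex.I * (ξ : ℂ) * (z : ℂ))) (2 * π)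
  rw [abs_of_pos (inv_pos.2 two_pi_pos), eq_inv_smul_iff₀ two_pi_pos.ne'] at hscale
  rw [fourier1, ← hscale, fourier_eq', ← integral_smul]
  congr with y
  simp only [smul_eq_mul, RCLike.inner_apply, conj_trivial, Complex.real_smul]
  have hphase : Complex.exp (-Complex.I * (ξ : ℂ) * ((2 * π * y : ℝ) : ℂ)) =
      Complex.exp (((-2 * π * (ξ * y) : ℝ) : ℂ) * Complex.I) := by
    congr 1
    push_cast
    ring
  rw [hphase]
  ring

lemma fourier1_invFourier1 {g : ℝ → ℂ} (hg : Continuous g) (hgi : Integrable g)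
    (hinv : Integrable (invFourier1 g)) (ξ : ℝ) : fourier1 (invFourier1 g) ξ = g ξ := by
  have hF : Integrable (𝓕 g) := by
    have hscaled := ((hinv.comp_mul_left' two_pi_pos.ne').const_mul ((2 * π : ℝ) : ℂ)).comp_neg
    refine hscaled.congr (.of_forall fun y => ?_)
    simp only [← fourierInv_eq_two_pi_mul_invFourier1, fourierInv_eq_fourier_neg, neg_neg]
  rw [fourier1_eq_fourier]
  simp only [← fourierInv_eq_two_pi_mul_invFourier1]
  exact congrFun (hg.fourier_fourierInv_eq hgi hF) ξ

end FourierInversion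

section Profile

variable {d : ℕ} {b W : ℝ → ℝ} {u0 : EuclideanSpace ℝ (Fin d) → ℂ} {τ : ℝ}
  {k q : EuclideanSpace ℝ (Fin d)}

lemma measurable_profileReg (hb : Measurable b) (hW : Measurable W) (hu : Measurable u0) (τ : ℝ) :
    Measurable (Function.uncurry fun z q => profileReg d b W u0 z q τ) := by
  have hjoint : Measurable (Function.uncurry fun (p : ℝ × EuclideanSpace ℝ (Fin d)) (ξ : ℝ) =>
      Complex.exp (Complex.I * (p.1 : ℂ) * (ξ : ℂ)) *
        (Complex.exp (-Complex.I * (b ξ : ℂ) * (τ : ℂ)) * restrictionReg d W u0 ξ p.2)) := by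
    unfold restrictionReg
    fun_prop
  exact hjoint.stronglyMeasurable.integral_prod_right.measurable.const_mul _

lemma fourier1_profileReg (hb : Continuous b) (hW : Continuous W) (hu : Continuous u0)
    (hsupp : HasCompactSupport u0) (hq : ‖q‖ = 1)
    (hint : Integrable fun z => profileReg d b W u0 z q τ) (ξ : ℝ) :
    fourier1 (fun z => profileReg d b W u0 z q τ) ξ =
      Complex.exp (-Complex.I * (b ξ : ℂ) * (τ : ℂ)) * restrictionReg d W u0 ξ q := by
  obtain ⟨M, -, hM⟩ := hsupp.exists_pos_le_norm
  have hcont : Continuous fun ξ : ℝ =>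
      Complex.exp (-Complex.I * (b ξ : ℂ) * (τ : ℂ)) * restrictionReg d W u0 ξ q := by
    unfold restrictionReg
    fun_prop
  have hcompact : HasCompactSupport fun ξ : ℝ =>
      Complex.exp (-Complex.I * (b ξ : ℂ) * (τ : ℂ)) * restrictionReg d W u0 ξ q := by
    refine .intro (isCompact_closedBall 0 M) fun ξ hξ => ?_
    have hnorm : M ≤ ‖|ξ| • q‖ := by
      rw [norm_smul, hq, mul_one, norm_eq_abs, abs_abs]
      exact (not_le.1 fun h => hξ (mem_closedBall_zero_iff.2 h)).le
    simp [restrictionReg, hM _ hnorm]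
  exact fourier1_invFourier1 hcont (hcont.integrable_of_hasCompactSupport hcompact) hint ξ

lemma cpow_two_pi_I_div_mul_cpow_neg {κ : ℝ} (hκ : 0 < κ) (s : ℝ) :
    (2 * (π : ℂ) * Complex.I / κ) ^ (s : ℂ) * (2 * (π : ℂ) * Complex.I) ^ (-(s : ℂ)) =
      ((κ ^ s : ℝ) : ℂ)⁻¹ := by
  have hne : 2 * (π : ℂ) * Complex.I ≠ 0 := by simp [pi_ne_zero]
  rw [div_eq_inv_mul, ← Complex.ofReal_inv, ofReal_mul_cpow (inv_pos.2 hκ) hne, mul_assoc,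
    ← Complex.cpow_add _ _ hne, add_neg_cancel, Complex.cpow_zero, mul_one,
    ← Complex.ofReal_cpow (inv_nonneg.2 hκ.le), inv_rpow hκ.le, Complex.ofReal_inv]

/-- The Fourier transform of the profile in the direction `q` at the frequency `⟪k, q⟫`. It is
written with `u0 (ξ • q)` instead of `u0 (|ξ| • q)`, which is smooth in `q` and makes no difference
for a cutoff `W` that vanishes on `ξ ≤ 0`. -/
def profileAmplitude (b W : ℝ → ℝ) (u0 : EuclideanSpace ℝ (Fin d) → ℂ) (τ : ℝ)
    (k q : EuclideanSpace ℝ (Fin d)) : ℂ :=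
  Complex.exp (-Complex.I * (b ⟪k, q⟫ : ℂ) * (τ : ℂ)) *
    ((2 * (π : ℂ) * Complex.I) ^ (-(((d : ℂ) - 1) / 2)) * (W ⟪k, q⟫ : ℂ) * u0 (⟪k, q⟫ • q))

lemma contDiff_profileAmplitude {n : ℕ} (hb : ContDiff ℝ n b) (hW : ContDiff ℝ n W)
    (hu : ContDiff ℝ n u0) (τ : ℝ) (k : EuclideanSpace ℝ (Fin d)) :
    ContDiff ℝ n (profileAmplitude b W u0 τ k) := by
  have hinner : ContDiff ℝ n fun q : EuclideanSpace ℝ (Fin d) => ⟪k, q⟫ :=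
    contDiff_const.inner ℝ contDiff_id
  have hofReal : ContDiff ℝ n ((↑) : ℝ → ℂ) := Complex.ofRealCLM.contDiff
  have hbC := hofReal.comp (hb.comp hinner)
  have hWC := hofReal.comp (hW.comp hinner)
  have huC := hu.comp (hinner.smul contDiff_id)
  exact ((contDiff_const.mul hbC).mul contDiff_const).cexp.mul ((contDiff_const.mul hWC).mul huC)

lemma profileAmplitude_eq (hW0 : ∀ ξ ≤ 0, W ξ = 0) :
    profileAmplitude b W u0 τ k q =
      Complex.exp (-Complex.I * (b ⟪k, q⟫ : ℂ) * (τ : ℂ)) * restrictionReg d W u0 ⟪k, q⟫ q := by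
  rw [profileAmplitude, restrictionReg]
  rcases le_total ⟪k, q⟫ 0 with hle | hle
  · simp [hW0 _ hle]
  · rw [abs_of_nonneg hle]

lemma cpow_mul_profileAmplitude (hk : k ≠ 0) :
    (2 * (π : ℂ) * Complex.I / ‖k‖) ^ (((d : ℂ) - 1) / 2) *
        profileAmplitude b W u0 τ k (‖k‖⁻¹ • k) =
      Complex.exp (-Complex.I * (b ‖k‖ : ℂ) * (τ : ℂ)) *
        ((W ‖k‖ / ‖k‖ ^ (((d : ℝ) - 1) / 2) : ℝ) : ℂ) * u0 k := by
  have hinner : ⟪k, ‖k‖⁻¹ • k⟫ = ‖k‖ := by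
    rw [real_inner_smul_right, real_inner_self_eq_norm_sq, sq,
      inv_mul_cancel_left₀ (norm_ne_zero_iff.2 hk)]
  have hcpow := cpow_two_pi_I_div_mul_cpow_neg (norm_pos_iff.2 hk) (((d : ℝ) - 1) / 2)
  push_cast at hcpow
  rw [profileAmplitude, hinner, smul_inv_smul₀ (norm_ne_zero_iff.2 hk)]
  push_cast
  linear_combination Complex.exp (-Complex.I * (b ‖k‖ : ℂ) * (τ : ℂ)) * (W ‖k‖ : ℂ) * u0 k * hcpow

lemma integrable_one_add_abs_pow_mul_rpow {n : ℕ} {s : ℝ} (hs : s < -(n + 1)) :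
    Integrable fun z : ℝ => (1 + |z|) ^ n * (1 + |z|) ^ s := by
  have hdecay : Integrable fun z : ℝ => (1 + ‖z‖) ^ (-(-(n + s))) :=
    integrable_one_add_norm (by simp; linarith)
  refine hdecay.congr (.of_forall fun z => ?_)
  have hpos : 0 < 1 + |z| := by positivity
  simp only [norm_eq_abs, neg_neg]
  rw [rpow_add hpos, rpow_natCast]

theorem tendsto_exp_mul_fourierD_shell_profileReg (hd : d = 1 ∨ d = 2 ∨ d = 3)
    (hb : ContDiff ℝ (d - 1 : ℕ) b) (hW : ContDiff ℝ (d - 1 : ℕ) W) (hW0 : ∀ ξ ≤ 0, W ξ = 0)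
    (hu : ContDiff ℝ (d - 1 : ℕ) u0) (hsupp : HasCompactSupport u0) {C α : ℝ} (hα : 0 < α)
    (hdecay : ∀ z q, ‖q‖ = 1 → ‖profileReg d b W u0 z q τ‖ ≤ C * (1 + |z|) ^ (-(d : ℝ) - α))
    (hk : k ≠ 0) :
    Tendsto (fun R : ℝ => Complex.exp (Complex.I * R * ‖k‖) *
        fourierD d (shell d R fun z q => profileReg d b W u0 z q τ) k) atTop
      (𝓝 (Complex.exp (-Complex.I * (b ‖k‖ : ℂ) * (τ : ℂ)) *
        ((W ‖k‖ / ‖k‖ ^ (((d : ℝ) - 1) / 2) : ℝ) : ℂ) * u0 k)) := by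
  have hd1 : (1 : ℝ) ≤ d := by rcases hd with rfl | rfl | rfl <;> norm_num
  let ν : ℝ → ℝ := fun z => C * (1 + |z|) ^ (-(d : ℝ) - α)
  have hν0 : ∀ z, 0 ≤ ν z := fun z => (norm_nonneg _).trans (hdecay z (‖k‖⁻¹ • k)
    (by simp [norm_smul, hk]))
  have hC : 0 ≤ C := by simpa [ν] using hν0 0
  have hνm : Measurable ν := by fun_prop
  have hνB : ∀ z, ν z ≤ C := fun z => mul_le_of_le_one_right hC <|
    rpow_le_one_of_one_le_of_nonpos (le_add_of_nonneg_right (abs_nonneg z)) (by linarith)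
  have hνint : Integrable ν := by
    have hs : -(d : ℝ) - α < -((0 : ℕ) + 1) := by push_cast; linarith
    simpa using (integrable_one_add_abs_pow_mul_rpow hs).const_mul C
  have hν : Integrable fun z => (1 + |z|) ^ (d - 1) * ν z := by
    have hs : -(d : ℝ) - α < -((d - 1 : ℕ) + 1) := by
      rw [Nat.cast_sub (by exact_mod_cast hd1)]
      push_cast
      linarith
    simpa only [ν, mul_left_comm] using (integrable_one_add_abs_pow_mul_rpow hs).const_mul C
  have hVm := measurable_profileReg hb.continuous.measurable hW.continuous.measurable
    hu.continuous.measurable τ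
  have hVint : ∀ q, ‖q‖ = 1 → Integrable fun z => profileReg d b W u0 z q τ := fun q hq =>
    hνint.mono' (hVm.comp measurable_prodMk_right).aestronglyMeasurable
      (.of_forall fun z => hdecay z q hq)
  have hamp : ∀ q, ‖q‖ = 1 →
      fourier1 (fun z => profileReg d b W u0 z q τ) ⟪k, q⟫ = profileAmplitude b W u0 τ k q :=
    fun q hq => by
      rw [fourier1_profileReg hb.continuous hW.continuous hu.continuous hsupp hq (hVint q hq),
        profileAmplitude_eq hW0]
  have hback : ∀ q, ‖q‖ = 1 → ⟪k, q⟫ ≤ 0 → profileAmplitude b W u0 τ k q = 0 := fun q _ hle => by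
    simp [profileAmplitude, hW0 _ hle]
  rw [← cpow_mul_profileAmplitude hk]
  exact tendsto_exp_mul_fourierD_shell hd hVm hdecay hνm hν0 hν hνB hk
    (contDiff_profileAmplitude hb hW hu τ k) hback hamp

end Profile

lemma tendsto_mul_div_sq_nhdsGT_zero {c τ : ℝ} (hc : 0 < c) (hτ : 0 < τ) :
    Tendsto (fun ε : ℝ => c * (τ / ε ^ 2)) (𝓝[>] 0) atTop := by
  have hsq : Tendsto (fun ε : ℝ => (ε ^ 2)⁻¹) (𝓝[>] 0) atTop := by
    simpa only [Function.comp_def, inv_pow] using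
      (tendsto_pow_atTop two_ne_zero).comp (tendsto_inv_nhdsGT_zero (𝕜 := ℝ))
  simpa only [div_eq_mul_inv] using (hsq.const_mul_atTop hτ).const_mul_atTop hc

lemma QhatReg_div_sq {d : ℕ} (c : ℝ) (b W : ℝ → ℝ) (u0 : EuclideanSpace ℝ (Fin d) → ℂ) {ε : ℝ}
    (hε : ε ≠ 0) (k : EuclideanSpace ℝ (Fin d)) (τ : ℝ) :
    QhatReg d c b W u0 ε k (τ / ε ^ 2) =
      fourierD d (shell d (c * (τ / ε ^ 2)) fun z q => profileReg d b W u0 z q τ) k := by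
  rw [QhatReg, mul_div_cancel₀ _ (pow_ne_zero 2 hε), mul_assoc]
  rfl

theorem reconstruction_simple_general {d : ℕ} (hd : d = 1 ∨ d = 2 ∨ d = 3) {c : ℝ} (hc : 0 < c)
    {b W : ℝ → ℝ} (hb : ContDiff ℝ (d - 1 : ℕ) b) (hW : ContDiff ℝ (d - 1 : ℕ) W)
    (hW0 : ∀ ξ ≤ 0, W ξ = 0) {u0 : EuclideanSpace ℝ (Fin d) → ℂ}
    (hu : ContDiff ℝ (d - 1 : ℕ) u0) (hsupp : HasCompactSupport u0) {τ : ℝ} (hτ : 0 < τ)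
    {C α : ℝ} (hα : 0 < α)
    (hdecay : ∀ z q, ‖q‖ = 1 → ‖profileReg d b W u0 z q τ‖ ≤ C * (1 + |z|) ^ (-(d : ℝ) - α))
    {k : EuclideanSpace ℝ (Fin d)} (hk : k ≠ 0) :
    Tendsto (fun ε : ℝ => QhatReg d c b W u0 ε k (τ / ε ^ 2) -
        Complex.exp (-Complex.I * (c : ℂ) * (‖k‖ : ℂ) * (τ : ℂ) / (ε : ℂ) ^ 2) *
          (Complex.exp (-Complex.I * (b ‖k‖ : ℂ) * (τ : ℂ)) *
            ((W ‖k‖ / ‖k‖ ^ (((d : ℝ) - 1) / 2) : ℝ) : ℂ) * u0 k))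
      (𝓝[>] (0 : ℝ)) (𝓝 0) := by
  have hlim := (tendsto_exp_mul_fourierD_shell_profileReg hd hb hW hW0 hu hsupp hα hdecay hk).comp
    (tendsto_mul_div_sq_nhdsGT_zero hc hτ)
  refine squeeze_zero_norm' ?_ (tendsto_iff_norm_sub_tendsto_zero.1 hlim)
  filter_upwards [self_mem_nhdsWithin] with ε hε
  have hphase : ‖Complex.exp (Complex.I * ((c * (τ / ε ^ 2) : ℝ) : ℂ) * ‖k‖)‖ = 1 := by
    rw [mul_assoc, ← Complex.ofReal_mul, Complex.norm_exp_I_mul_ofReal]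
  have hcancel : Complex.exp (Complex.I * ((c * (τ / ε ^ 2) : ℝ) : ℂ) * ‖k‖) *
      Complex.exp (-Complex.I * (c : ℂ) * (‖k‖ : ℂ) * (τ : ℂ) / (ε : ℂ) ^ 2) = 1 := by
    rw [← Complex.exp_add, ← Complex.exp_zero]
    congr 1
    push_cast
    ring
  rw [← one_mul ‖_‖, ← hphase, ← norm_mul, mul_sub, ← mul_assoc, hcancel, one_mul,
    QhatReg_div_sq c b W u0 (ne_of_gt hε) k τ, Function.comp_apply]

/-- simplified main theorem: for smooth compactly supported `û₀`, the
regularized reconstruction with trivial profile evolution (`b = 0`) approximates the wave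
evolution: for `|k| > ρ`, `(Q̂₀^ρ û₀)(k, τ/ε²) - e^{-ic|k|τ/ε²} û₀(k) → 0` as `ε → 0`. -/
theorem reconstruction_simple (d : ℕ) (hd : d = 1 ∨ d = 2 ∨ d = 3) (c : ℝ) (hc : 0 < c)
    (u0 : EuclideanSpace ℝ (Fin d) → ℂ)
    (hu0_smooth : ContDiff ℝ (⊤ : ℕ∞) u0) (hu0_supp : HasCompactSupport u0)
    (ρ : ℝ) (hρ : 0 < ρ) (Wρ : ℝ → ℝ)
    (hW_smooth : ContDiff ℝ (d - 1 : ℕ) Wρ)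
    (hW_zero : ∀ ξ : ℝ, ξ ≤ 0 → Wρ ξ = 0)
    (hW_eq : ∀ ξ : ℝ, ρ ≤ ξ → Wρ ξ = ξ ^ (((d : ℝ) - 1) / 2))
    (hW_le : ∀ ξ : ℝ, 0 ≤ ξ → 0 ≤ Wρ ξ ∧ Wρ ξ ≤ ξ ^ (((d : ℝ) - 1) / 2))
    (hdecay : ∃ C > (0 : ℝ), ∃ α > (0 : ℝ),
      ∀ (z : ℝ) (q : EuclideanSpace ℝ (Fin d)) (τ : ℝ), ‖q‖ = 1 → 0 < τ →
        ‖profileReg d (fun _ => 0) Wρ u0 z q τ‖ ≤ C * (1 + |z|) ^ (-(d : ℝ) - α))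
    (hsmooth : ∀ τ : ℝ, 0 < τ → ∃ G : ℝ × EuclideanSpace ℝ (Fin d) → ℂ,
      ContDiff ℝ (d - 1 : ℕ) G ∧
        ∀ (ξ : ℝ) (q : EuclideanSpace ℝ (Fin d)), ‖q‖ = 1 →
          G (ξ, q) = fourier1 (fun z => profileReg d (fun _ => 0) Wρ u0 z q τ) ξ)
    (τ : ℝ) (hτ : 0 < τ) (k : EuclideanSpace ℝ (Fin d)) (hk : ρ < ‖k‖) :
    Filter.Tendsto (fun ε : ℝ =>
        QhatReg d c (fun _ => 0) Wρ u0 ε k (τ / ε ^ 2) -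
          Complex.exp (-Complex.I * (c : ℂ) * (‖k‖ : ℂ) * (τ : ℂ) / (ε : ℂ) ^ 2) * u0 k)
      (𝓝[>] (0 : ℝ)) (𝓝 0) := by
  obtain ⟨C, -, α, hα, hdecay⟩ := hdecay
  have hk0 : 0 < ‖k‖ := hρ.trans hk
  have hratio : Wρ ‖k‖ / ‖k‖ ^ (((d : ℝ) - 1) / 2) = 1 := by
    rw [hW_eq _ hk.le, div_self (rpow_pos_of_pos hk0 _).ne']
  have hlim := reconstruction_simple_general hd hc contDiff_const hW_smooth hW_zero
    (contDiff_infty.1 hu0_smooth _) hu0_supp hτ hα (fun z q hq => hdecay z q τ hq hτ)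
    (norm_pos_iff.1 hk0)
  simpa [hratio] using hlim

end
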